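/- For every integer d ≥ 1, the genus 0 Hurwitz number satisfies H_{0,d} = (2d−2)! · d^{d−3} / d! in ℚ. Equivalently, the number of (2d−2)-tuples (τ₁, …, τ_{2d−2}) of transpositions in the symmetric group S_d whose product τ₁τ₂⋯τ_{2d−2} is the identity and which generate a subgroup acting transitively on the d letters equals (2d−2)! · d^{d−3} (i.e., this count times d³ equals (2d−2)! · d^d). -/

import Mathlib

/-- The number of `r`-tuples `(τ₁, …, τ_r)` of transpositions in the symmetric group on
`d` letters whose product `τ₁ ⬝ τ₂ ⋯ τ_r` is the identity and which generate a subgroup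
acting transitively on the `d` letters. -/
noncomputable def hurwitzTupleCount (d r : ℕ) : ℕ :=
  Nat.card {τ : Fin r → Equiv.Perm (Fin d) //
    (∀ i, (τ i).IsSwap) ∧ (List.ofFn τ).prod = 1 ∧
    ∀ x y : Fin d, ∃ σ ∈ Subgroup.closure (Set.range τ), σ x = y}

/-- The Hurwitz number `H_{g,d}`: `1/d!` times the number of `(2g - 2 + 2d)`-tuples of
transpositions in `S_d` with product the identity, generating a transitive subgroup. -/
noncomputable def hurwitzNumber (g d : ℕ) : ℚ :=
  (hurwitzTupleCount d (2 * g + 2 * d - 2) : ℚ) / (Nat.factorial d : ℚ)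

set_option linter.unusedSectionVars false

namespace Hurw

open Finset

/-- The Abel polynomial attached to a finite set of weights, in one variable. -/
noncomputable def abelP {ι : Type*} [DecidableEq ι] (z : ι → ℚ) (S : Finset ι) : Polynomial ℚ :=
  if S = ∅ then 1 else Polynomial.X * (Polynomial.X + Polynomial.C (∑ i ∈ S, z i)) ^ (#S - 1)

theorem abelP_eval_zero {ι : Type*} [DecidableEq ι] (z : ι → ℚ) (S : Finset ι) :
    (abelP z S).eval 0 = if S = ∅ then 1 else 0 := by
  unfold abelP; split_ifs <;> simp

theorem abelP_eval {ι : Type*} [DecidableEq ι] (z : ι → ℚ) (S : Finset ι) (x : ℚ)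
    (hx : 0 < x) :
    (abelP z S).eval x = x * (x + ∑ i ∈ S, z i) ^ ((#S : ℤ) - 1) := by
  unfold abelP
  split_ifs with h
  · subst h
    simp [zpow_neg, hx.ne']
  · simp only [Polynomial.eval_mul, Polynomial.eval_X, Polynomial.eval_pow, Polynomial.eval_add,
      Polynomial.eval_C]
    congr 1
    have : 1 ≤ #S := Finset.card_pos.mpr (Finset.nonempty_iff_ne_empty.mpr h)
    rw [← zpow_natCast]
    congr 1
    omega

theorem abelP_derivative {ι : Type*} [DecidableEq ι] (z : ι → ℚ) (S : Finset ι) :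
    Polynomial.derivative (abelP z S) =
      ∑ i ∈ S, (abelP z (S.erase i)).comp (Polynomial.X + Polynomial.C (z i)) := by
  by_cases h0 : S = ∅
  · subst h0; simp [abelP]
  by_cases h1 : #S = 1
  · obtain ⟨i, rfl⟩ := Finset.card_eq_one.mp h1
    simp [abelP]
  obtain ⟨k, hk⟩ : ∃ k, #S = k + 2 := by
    have : 1 ≤ #S := Finset.card_pos.mpr (Finset.nonempty_iff_ne_empty.mpr h0)
    exact ⟨#S - 2, by omega⟩
  have key : ∀ i ∈ S, (abelP z (S.erase i)).comp (Polynomial.X + Polynomial.C (z i)) =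
      (Polynomial.X + Polynomial.C (z i)) *
        (Polynomial.X + Polynomial.C (∑ i ∈ S, z i)) ^ k := by
    intro i hi
    have hc : #(S.erase i) = k + 1 := by rw [Finset.card_erase_of_mem hi, hk]; rfl
    have hne : S.erase i ≠ ∅ := by
      intro h; rw [h] at hc; simp at hc
    unfold abelP
    rw [if_neg hne, hc]
    simp only [Polynomial.mul_comp, Polynomial.X_comp, Polynomial.pow_comp, Polynomial.add_comp,
      Polynomial.C_comp, Nat.add_sub_cancel]
    rw [← Finset.add_sum_erase S z hi, Polynomial.C_add, add_assoc]
  rw [Finset.sum_congr rfl key, ← Finset.sum_mul, Finset.sum_add_distrib]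
  simp only [Finset.sum_const, hk]
  unfold abelP
  rw [if_neg h0, hk]
  simp only [Polynomial.derivative_mul, Polynomial.derivative_X, Polynomial.derivative_pow,
    Polynomial.derivative_add, Polynomial.derivative_C, map_sum]
  push_cast
  simp
  ring

theorem poly_ext_of_derivative (p q : Polynomial ℚ)
    (h : Polynomial.derivative p = Polynomial.derivative q) (h0 : p.eval 0 = q.eval 0) :
    p = q := by
  have h1 : Polynomial.derivative (p - q) = 0 := by simp [h]
  have h2 := Polynomial.derivative_eq_zero.mp h1
  obtain ⟨c, hc⟩ := Polynomial.natDegree_eq_zero.mp h2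
  have h3 : (p - q).eval 0 = 0 := by simp [h0]
  rw [← hc] at h3
  simp at h3
  rw [h3] at hc
  simp at hc
  exact (sub_eq_zero.mp hc.symm)

theorem sum_comp_poly {ι : Type*} (s : Finset ι) (f : ι → Polynomial ℚ) (q : Polynomial ℚ) :
    (∑ i ∈ s, f i).comp q = ∑ i ∈ s, (f i).comp q :=
  map_sum (Polynomial.compRingHom q) f s

/-- Reindexing: marked subsets. -/
theorem sum_powerset_mark {ι M : Type*} [DecidableEq ι] [AddCommMonoid M] (J : Finset ι)
    (f : ι → Finset ι → Finset ι → M) :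
    ∑ S ∈ J.powerset, ∑ i ∈ S, f i (S.erase i) (J \ S) =
      ∑ i ∈ J, ∑ S ∈ (J.erase i).powerset, f i S ((J.erase i) \ S) := by
  rw [Finset.sum_sigma', Finset.sum_sigma']
  refine Finset.sum_bij' (fun x _ => ⟨x.2, x.1.erase x.2⟩) (fun x _ => ⟨insert x.1 x.2, x.1⟩)
    ?_ ?_ ?_ ?_ ?_
  · rintro ⟨S, i⟩ h
    simp only [Finset.mem_sigma, Finset.mem_powerset] at h ⊢
    exact ⟨h.1 h.2, Finset.erase_subset_erase _ h.1⟩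
  · rintro ⟨i, S⟩ h
    simp only [Finset.mem_sigma, Finset.mem_powerset] at h ⊢
    refine ⟨Finset.insert_subset h.1 (h.2.trans (Finset.erase_subset _ _)), by simp⟩
  · rintro ⟨S, i⟩ h
    simp only [Finset.mem_sigma, Finset.mem_powerset] at h
    simp [Finset.insert_erase h.2]
  · rintro ⟨i, S⟩ h
    simp only [Finset.mem_sigma, Finset.mem_powerset] at h
    have : i ∉ S := fun hi => by simpa using h.2 hi
    simp [Finset.erase_insert this]
  · rintro ⟨S, i⟩ h
    simp only [Finset.mem_sigma, Finset.mem_powerset] at h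
    congr 1
    ext x
    simp only [Finset.mem_sdiff, Finset.mem_erase]
    by_cases hx : x = i
    · subst hx; simp [h.2]
    · simp [hx]

theorem sum_powerset_compl {ι M : Type*} [DecidableEq ι] [AddCommMonoid M] (J : Finset ι)
    (f : Finset ι → Finset ι → M) :
    ∑ S ∈ J.powerset, f S (J \ S) = ∑ S ∈ J.powerset, f (J \ S) S := by
  refine Finset.sum_bij' (fun S _ => J \ S) (fun S _ => J \ S) ?_ ?_ ?_ ?_ ?_
  · intro S _; simp
  · intro S _; simp
  · intro S h; simpa using h
  · intro S h; simpa using h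
  · intro S h
    rw [Finset.sdiff_sdiff_eq_self (Finset.mem_powerset.mp h)]

/-- Hurwitz's multivariate Abel identity. -/
theorem abelP_add {ι : Type*} [DecidableEq ι] (z : ι → ℚ) (y : ℚ) (J : Finset ι) :
    ∑ S ∈ J.powerset, abelP z S * Polynomial.C ((abelP z (J \ S)).eval y) =
      (abelP z J).comp (Polynomial.X + Polynomial.C y) := by
  induction hn : #J generalizing J with
  | zero =>
    rw [Finset.card_eq_zero] at hn; subst hn
    simp [abelP]
  | succ n ih =>
    apply poly_ext_of_derivative
    · rw [Polynomial.derivative_comp, abelP_derivative, Polynomial.derivative_sum]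
      have h1 : ∀ S ∈ J.powerset,
          Polynomial.derivative (abelP z S * Polynomial.C ((abelP z (J \ S)).eval y)) =
          ∑ i ∈ S, (abelP z (S.erase i)).comp (Polynomial.X + Polynomial.C (z i)) *
            Polynomial.C ((abelP z (J \ S)).eval y) := by
        intro S _
        rw [Polynomial.derivative_mul, abelP_derivative, Polynomial.derivative_C, mul_zero,
          add_zero, Finset.sum_mul]
      rw [Finset.sum_congr rfl h1, sum_powerset_mark J (fun i S T =>
        (abelP z S).comp (Polynomial.X + Polynomial.C (z i)) *
            Polynomial.C ((abelP z T).eval y))]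
      simp only [Polynomial.derivative_add, Polynomial.derivative_X, Polynomial.derivative_C,
        add_zero, mul_one, sum_comp_poly]
      rw [one_mul]
      refine Finset.sum_congr rfl fun i hi => ?_
      have := congrArg (fun p => p.comp (Polynomial.X + Polynomial.C (z i)))
        (ih (J.erase i) (by rw [Finset.card_erase_of_mem hi, hn]; rfl))
      simp only [sum_comp_poly, Polynomial.mul_comp, Polynomial.C_comp,
        Polynomial.comp_assoc, Polynomial.add_comp, Polynomial.X_comp] at this ⊢
      rw [this]
      congr 1
      ring
    · simp only [Polynomial.eval_finsetSum, Polynomial.eval_mul, abelP_eval_zero,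
        Polynomial.eval_C, Polynomial.eval_comp, Polynomial.eval_add, Polynomial.eval_X, zero_add]
      rw [Finset.sum_eq_single ∅]
      · simp
      · intro S _ h; simp [h]
      · simp

/-- Numerical form. -/
theorem abel_add {ι : Type*} [DecidableEq ι] (z : ι → ℚ) (J : Finset ι) (x y : ℚ) :
    ∑ S ∈ J.powerset, (abelP z S).eval x * (abelP z (J \ S)).eval y =
      (abelP z J).eval (x + y) := by
  have := congrArg (Polynomial.eval x) (abelP_add z y J)
  simpa [Polynomial.eval_finsetSum, Polynomial.eval_comp] using this

end Hurw

namespace Hurw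

open Finset

theorem abel_minus_two {ι : Type*} [DecidableEq ι] (z : ι → ℚ) (hz : ∀ i, 0 < z i) (x : ℚ)
    (hx : 0 < x) (S : Finset ι) :
    x ^ 2 * (x + ∑ i ∈ S, z i) ^ ((#S : ℤ) - 2) = (abelP z S).eval x -
      ∑ i ∈ S, z i * x / (x + z i) * (abelP z (S.erase i)).eval (x + z i) := by
  have hsum : 0 ≤ ∑ i ∈ S, z i := Finset.sum_nonneg fun i _ => (hz i).le
  have hX : x + ∑ i ∈ S, z i ≠ 0 := by positivity
  have h1 : ∀ i ∈ S, z i * x / (x + z i) * (abelP z (S.erase i)).eval (x + z i) =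
      z i * (x * (x + ∑ i ∈ S, z i) ^ ((#S : ℤ) - 2)) := by
    intro i hi
    have hi' := hz i
    rw [abelP_eval z _ _ (by positivity), Finset.card_erase_of_mem hi, add_assoc,
      Finset.add_sum_erase S z hi, Nat.cast_sub (Finset.card_pos.mpr ⟨i, hi⟩)]
    have : ((#S : ℤ) - (1 : ℕ) - 1) = (#S : ℤ) - 2 := by push_cast; ring
    rw [this]
    have : x + z i ≠ 0 := by positivity
    field_simp
  rw [Finset.sum_congr rfl h1, ← Finset.sum_mul, abelP_eval z _ _ hx]
  have : ((#S : ℤ) - 1) = ((#S : ℤ) - 2) + 1 := by ring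
  rw [this, zpow_add_one₀ hX]
  ring

theorem abel_cut {ι : Type*} [DecidableEq ι] (z : ι → ℚ) (hz : ∀ i, 0 < z i) (x y : ℚ)
    (hx : 0 < x) (hy : 0 < y) (J : Finset ι) (n : ℚ) (hn : n = x + y + ∑ i ∈ J, z i) :
    ∑ S ∈ J.powerset, (x ^ 2 * (x + ∑ i ∈ S, z i) ^ ((#S : ℤ) - 2)) *
        (y ^ 2 * (y + ∑ i ∈ J \ S, z i) ^ ((#(J \ S) : ℤ) - 2)) =
      (x + y) * n ^ ((#J : ℤ) - 1)
      - ∑ i ∈ J, z i * (x * (x + y + z i) / (x + z i)) * n ^ ((#J : ℤ) - 2)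
      - ∑ i ∈ J, z i * (y * (x + y + z i) / (y + z i)) * n ^ ((#J : ℤ) - 2)
      + ∑ i ∈ J, ∑ j ∈ J.erase i, z i * z j * (x * y * (x + y + z i + z j) /
          ((x + z i) * (y + z j))) * n ^ ((#J : ℤ) - 3) := by
  set A := fun (S : Finset ι) (x : ℚ) => (abelP z S).eval x with hA
  have e0 : ∑ S ∈ J.powerset, A S x * A (J \ S) y = (x + y) * n ^ ((#J : ℤ) - 1) := by
    rw [hA, abel_add, abelP_eval z _ _ (by positivity), hn]
  -- general single-marked evaluation
  have e1 : ∀ x y : ℚ, 0 < x → 0 < y → n = x + y + ∑ i ∈ J, z i →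
      ∑ S ∈ J.powerset, (∑ i ∈ S, z i * x / (x + z i) * A (S.erase i) (x + z i)) * A (J \ S) y =
      ∑ i ∈ J, z i * (x * (x + y + z i) / (x + z i)) * n ^ ((#J : ℤ) - 2) := by
    intro x y hx hy hn
    simp only [Finset.sum_mul]
    rw [sum_powerset_mark J (fun i S T => z i * x / (x + z i) * A S (x + z i) * A T y)]
    refine Finset.sum_congr rfl fun i hi => ?_
    have hi' := hz i
    simp only [mul_assoc]
    rw [← Finset.mul_sum, ]
    rw [hA, abel_add, abelP_eval z _ _ (by positivity), Finset.card_erase_of_mem hi,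
      Nat.cast_sub (Finset.card_pos.mpr ⟨i, hi⟩)]
    have e : ((#J : ℤ) - (1 : ℕ) - 1) = (#J : ℤ) - 2 := by push_cast; ring
    have e' : x + z i + y + ∑ i ∈ J.erase i, z i = n := by
      rw [hn, ← Finset.add_sum_erase J z hi]; ring
    rw [e, e']
    have : x + z i ≠ 0 := by positivity
    field_simp
    ring
  have e2 : ∑ S ∈ J.powerset, A S x *
      (∑ i ∈ J \ S, z i * y / (y + z i) * A ((J \ S).erase i) (y + z i)) =
      ∑ i ∈ J, z i * (y * (x + y + z i) / (y + z i)) * n ^ ((#J : ℤ) - 2) := by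
    rw [sum_powerset_compl J (fun S T => A S x *
      (∑ i ∈ T, z i * y / (y + z i) * A (T.erase i) (y + z i)))]
    rw [show x + y = y + x by ring, ← e1 y x hy hx (by rw [hn]; ring)]
    exact Finset.sum_congr rfl fun S _ => mul_comm _ _
  have e3 : ∑ S ∈ J.powerset, (∑ i ∈ S, z i * x / (x + z i) * A (S.erase i) (x + z i)) *
      (∑ i ∈ J \ S, z i * y / (y + z i) * A ((J \ S).erase i) (y + z i)) =
      ∑ i ∈ J, ∑ j ∈ J.erase i, z i * z j * (x * y * (x + y + z i + z j) /
          ((x + z i) * (y + z j))) * n ^ ((#J : ℤ) - 3) := by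
    simp only [Finset.sum_mul]
    rw [sum_powerset_mark J (fun i S T => z i * x / (x + z i) * A S (x + z i) *
      (∑ i ∈ T, z i * y / (y + z i) * A (T.erase i) (y + z i)))]
    refine Finset.sum_congr rfl fun i hi => ?_
    rw [sum_powerset_compl (J.erase i) (fun S T => z i * x / (x + z i) * A S (x + z i) *
      (∑ i ∈ T, z i * y / (y + z i) * A (T.erase i) (y + z i)))]
    simp only [Finset.mul_sum]
    rw [sum_powerset_mark (J.erase i) (fun j S T => z i * x / (x + z i) * A T (x + z i) *
      (z j * y / (y + z j) * A S (y + z j)))]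
    refine Finset.sum_congr rfl fun j hj => ?_
    have hi' := hz i
    have hj' := hz j
    have e : ∀ S : Finset ι, z i * x / (x + z i) * A ((J.erase i).erase j \ S) (x + z i) *
      (z j * y / (y + z j) * A S (y + z j)) = (z i * x / (x + z i) * (z j * y / (y + z j))) *
        (A S (y + z j) * A ((J.erase i).erase j \ S) (x + z i)) := by intro S; ring
    simp only [e]
    rw [← Finset.mul_sum, hA, abel_add, abelP_eval z _ _ (by positivity),
      Finset.card_erase_of_mem hj,
      Nat.cast_sub (Finset.card_pos.mpr ⟨j, hj⟩), Finset.card_erase_of_mem hi,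
      Nat.cast_sub (Finset.card_pos.mpr ⟨i, hi⟩)]
    have e : ((#J : ℤ) - (1 : ℕ) - (1 : ℕ) - 1) = (#J : ℤ) - 3 := by push_cast; ring
    have e' : y + z j + (x + z i) + ∑ i ∈ (J.erase i).erase j, z i = n := by
      rw [hn, ← Finset.add_sum_erase J z hi, ← Finset.add_sum_erase (J.erase i) z hj]; ring
    rw [e, e']
    have : x + z i ≠ 0 := by positivity
    have : y + z j ≠ 0 := by positivity
    field_simp
    ring
  rw [← e0, ← e1 x y hx hy hn, ← e2, ← e3, ← Finset.sum_sub_distrib, ← Finset.sum_sub_distrib,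
    ← Finset.sum_add_distrib]
  refine Finset.sum_congr rfl fun S _ => ?_
  rw [abel_minus_two z hz x hx, abel_minus_two z hz y hy]
  ring

end Hurw

namespace Hurw

open Finset

/-- Hurwitz's identity, second form. -/
theorem abelP_add' {ι : Type*} [DecidableEq ι] (z : ι → ℚ) (y : ℚ) (J : Finset ι) :
    ∑ S ∈ J.powerset, abelP z S * Polynomial.C ((y + ∑ i ∈ J \ S, z i) ^ #(J \ S)) =
      (Polynomial.X + Polynomial.C (y + ∑ i ∈ J, z i)) ^ #J := by
  induction hn : #J generalizing J with
  | zero =>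
    rw [Finset.card_eq_zero] at hn; subst hn
    simp [abelP]
  | succ n ih =>
    apply poly_ext_of_derivative
    · rw [Polynomial.derivative_sum]
      have h1 : ∀ S ∈ J.powerset,
          Polynomial.derivative (abelP z S *
            Polynomial.C ((y + ∑ i ∈ J \ S, z i) ^ #(J \ S))) =
          ∑ i ∈ S, (abelP z (S.erase i)).comp (Polynomial.X + Polynomial.C (z i)) *
            Polynomial.C ((y + ∑ i ∈ J \ S, z i) ^ #(J \ S)) := by
        intro S _
        rw [Polynomial.derivative_mul, abelP_derivative, Polynomial.derivative_C, mul_zero,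
          add_zero, Finset.sum_mul]
      rw [Finset.sum_congr rfl h1, sum_powerset_mark J (fun i S T =>
        (abelP z S).comp (Polynomial.X + Polynomial.C (z i)) *
            Polynomial.C ((y + ∑ i ∈ T, z i) ^ #T))]
      have h2 : ∀ i ∈ J, ∑ S ∈ (J.erase i).powerset,
          (abelP z S).comp (Polynomial.X + Polynomial.C (z i)) *
            Polynomial.C ((y + ∑ j ∈ J.erase i \ S, z j) ^ #(J.erase i \ S)) =
          (Polynomial.X + Polynomial.C (y + ∑ i ∈ J, z i)) ^ n := by
        intro i hi
        have := congrArg (fun p => p.comp (Polynomial.X + Polynomial.C (z i)))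
          (ih (J.erase i) (by rw [Finset.card_erase_of_mem hi, hn]; rfl))
        simp only [sum_comp_poly, Polynomial.mul_comp, Polynomial.C_comp, Polynomial.pow_comp,
          Polynomial.comp_assoc, Polynomial.add_comp, Polynomial.X_comp] at this
        rw [this, ← Finset.add_sum_erase J z hi]
        simp only [Polynomial.C_add]
        congr 1
        ring
      rw [Finset.sum_congr rfl h2, Finset.sum_const, hn, Polynomial.derivative_pow]
      simp
    · simp only [Polynomial.eval_finsetSum, Polynomial.eval_mul, abelP_eval_zero,
        Polynomial.eval_C, Polynomial.eval_pow, Polynomial.eval_add, Polynomial.eval_X, zero_add]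
      rw [Finset.sum_eq_single ∅]
      · simp [hn]
      · intro S _ h; simp [h]
      · simp

theorem abel_one (j N : ℕ) (hj : 0 < j) :
    ∑ i ∈ range (N + 1), ((j : ℚ) * ((j + i : ℕ) : ℚ) ^ i / (i.factorial * ((j + i : ℕ) : ℚ))) *
      (((N - i : ℕ) : ℚ) ^ (N - i) / ((N - i).factorial : ℚ)) =
      ((N + j : ℕ) : ℚ) ^ N / (N.factorial : ℚ) := by
  have h := congrArg (Polynomial.eval (j : ℚ)) (abelP_add' (fun _ : ℕ => (1 : ℚ)) 0 (range N))
  simp only [Polynomial.eval_finsetSum, Polynomial.eval_mul, Polynomial.eval_C,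
    Polynomial.eval_pow, Polynomial.eval_add, Polynomial.eval_X] at h
  have hj' : (0 : ℚ) < j := by exact_mod_cast hj
  have h1 : ∀ S ∈ (range N).powerset,
      (abelP (fun _ : ℕ => (1 : ℚ)) S).eval (j : ℚ) *
        (0 + ∑ i ∈ range N \ S, (1 : ℚ)) ^ #(range N \ S) =
      (fun k : ℕ => (j : ℚ) * ((j + k : ℕ) : ℚ) ^ k / ((j + k : ℕ) : ℚ) *
        ((N - k : ℕ) : ℚ) ^ (N - k)) #S := by
    intro S hS
    have hS' := Finset.mem_powerset.mp hS
    rw [abelP_eval _ _ _ hj', Finset.card_sdiff_of_subset hS', Finset.card_range]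
    have hne : (j : ℚ) + (#S : ℚ) ≠ 0 := by positivity
    simp [Finset.card_sdiff_of_subset hS', zpow_sub₀ hne]
    ring_nf
  rw [Finset.sum_congr rfl h1, Finset.sum_powerset_apply_card (fun k : ℕ =>
      (j : ℚ) * ((j + k : ℕ) : ℚ) ^ k / ((j + k : ℕ) : ℚ) *
        ((N - k : ℕ) : ℚ) ^ (N - k)), Finset.card_range] at h
  simp at h
  have hN : (N.factorial : ℚ) ≠ 0 := by positivity
  rw [eq_div_iff hN, Nat.cast_add, add_comm (N : ℚ), ← h, Finset.sum_mul]
  refine Finset.sum_congr rfl fun i hi => ?_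
  have hi' : i ≤ N := by simpa [Nat.lt_succ_iff] using hi
  rw [Nat.cast_choose ℚ hi']
  have : (j : ℚ) + i ≠ 0 := by positivity
  push_cast
  field_simp

/-- `s^s / s!`. -/
noncomputable def bb (s : ℕ) : ℚ := (s : ℚ) ^ s / (s.factorial : ℚ)

theorem bb_pos (s : ℕ) : 0 < bb s := by
  unfold bb
  rcases Nat.eq_zero_or_pos s with h | h
  · subst h; simp
  · positivity

theorem bb_zero : bb 0 = 1 := by simp [bb]

/-- Coefficients of powers of the tree function. -/
noncomputable def cc (j s : ℕ) : ℚ :=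
  if j ≤ s then (j : ℚ) * (s : ℚ) ^ (s - j) / ((s - j).factorial * (s : ℚ)) else 0

theorem sum_cc (j p : ℕ) (hj : 0 < j) (hjp : j ≤ p) :
    ∑ s ∈ range (p + 1), cc j s * bb (p - s) = (p : ℚ) ^ (p - j) / ((p - j).factorial : ℚ) := by
  obtain ⟨N, rfl⟩ := Nat.exists_eq_add_of_le hjp
  rw [show j + N + 1 = j + (N + 1) by ring, Finset.sum_range_add]
  rw [Finset.sum_eq_zero, zero_add]
  · have := abel_one j N hj
    rw [Nat.add_sub_cancel_left, add_comm j N, ← this]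
    refine Finset.sum_congr rfl fun i hi => ?_
    have e : N + j - (j + i) = N - i := by omega
    simp only [cc, bb, Nat.add_sub_cancel_left, e]
    rw [if_pos (by omega)]
  · intro s hs
    have : s < j := by simpa using hs
    simp [cc, this]

theorem telescope (q s k m : ℕ) (hq : 0 < q) (hs : 0 < s) (hk : k + m = s) :
    ∑ j ∈ range k, (q : ℚ) ^ (q + j) / ((q + j).factorial : ℚ) *
      ((j : ℚ) * (s : ℚ) ^ (s - j) / ((s - j).factorial : ℚ)) =
    (q * bb q * (s * bb s) / (s + q)) -
      (q : ℚ) ^ (q + k) * (s : ℚ) ^ (m + 1) * (q + k) /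
        ((q + k).factorial * m.factorial * (s + q)) := by
  induction k generalizing m with
  | zero =>
    have : m = s := by omega
    subst this
    simp only [Finset.range_zero, Finset.sum_empty, bb]
    have : (m : ℚ) + q ≠ 0 := by positivity
    field_simp
    push_cast
    ring
  | succ k ih =>
    rw [Finset.sum_range_succ, ih (m + 1) (by omega)]
    have e : s - k = m + 1 := by omega
    have hs' : (s : ℚ) = k + 1 + m := by rw [← hk]; push_cast; ring
    rw [e, ← add_assoc q k 1, Nat.factorial_succ, Nat.factorial_succ]
    have : (s : ℚ) + q ≠ 0 := by positivity
    have h2 : (q : ℚ) + k + 1 ≠ 0 := by positivity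
    have h3 : (m : ℚ) + 1 ≠ 0 := by positivity
    push_cast
    field_simp
    rw [hs']
    ring

theorem bb_expand (q s p : ℕ) (hq : 0 < q) (hs : 0 < s) (hsp : s ≤ p) :
    q * bb q * bb s / (s + q) =
      ∑ j ∈ range (p + 1), (q : ℚ) ^ (q + j) / ((q + j).factorial : ℚ) * cc j s := by
  obtain ⟨m, rfl⟩ := Nat.exists_eq_add_of_le hsp
  rw [show s + m + 1 = (s + 1) + m by ring, Finset.sum_range_add]
  rw [Finset.sum_eq_zero (s := range m), add_zero]
  swap
  · intro j _
    simp [cc]; intro h; omega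
  have h := telescope q s s 0 hq hs (by ring)
  have hs' : (s : ℚ) ≠ 0 := by positivity
  rw [Finset.sum_range_succ]
  have e : ∑ j ∈ range s, (q : ℚ) ^ (q + j) / ((q + j).factorial : ℚ) * cc j s =
      (∑ j ∈ range s, (q : ℚ) ^ (q + j) / ((q + j).factorial : ℚ) *
      ((j : ℚ) * (s : ℚ) ^ (s - j) / ((s - j).factorial : ℚ))) / s := by
    rw [Finset.sum_div]
    refine Finset.sum_congr rfl fun j hj => ?_
    have : j ≤ s := by simp at hj; omega
    simp only [cc, if_pos this]
    field_simp
  rw [e, h]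
  simp only [cc, le_refl, if_true, Nat.sub_self]
  have : (s : ℚ) + q ≠ 0 := by positivity
  simp
  field_simp
  ring

theorem K_eval (p q : ℕ) (hq : 0 < q) :
    ∑ s ∈ range (p + 1), q * bb q * bb s / (s + q) * bb (p - s) =
    ∑ j ∈ range (p + 1), (q : ℚ) ^ (q + j) / ((q + j).factorial : ℚ) *
      ((p : ℚ) ^ (p - j) / ((p - j).factorial : ℚ)) := by
  rw [Finset.sum_range_succ', Finset.sum_range_succ' (n := p)]
  congr 1
  · have h1 : ∀ s ∈ range p, q * bb q * bb (s + 1) / (((s + 1 : ℕ) : ℚ) + q) * bb (p - (s + 1)) =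
      ∑ j ∈ range p, (q : ℚ) ^ (q + (j + 1)) / ((q + (j + 1)).factorial : ℚ) *
        (cc (j + 1) (s + 1) * bb (p - (s + 1))) := by
      intro s hs
      have := Finset.mem_range.mp hs
      rw [bb_expand q (s + 1) p hq (by omega) (by omega), Finset.sum_range_succ']
      simp only [cc, Nat.cast_zero, zero_mul, zero_div, ite_self, mul_zero, add_zero,
        Finset.sum_mul, mul_assoc]
    rw [Finset.sum_congr rfl h1, Finset.sum_comm]
    refine Finset.sum_congr rfl fun j hj => ?_
    rw [← Finset.mul_sum]
    congr 1
    have := Finset.mem_range.mp hj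
    rw [← sum_cc (j + 1) p (by omega) (by omega), Finset.sum_range_succ']
    simp [cc]
  · have : (q : ℚ) ≠ 0 := by positivity
    have h0 : (p.factorial : ℚ) ≠ 0 := by positivity
    simp only [bb, Nat.factorial_zero, Nat.cast_zero, pow_zero, zero_add, Nat.sub_zero, add_zero]
    field_simp
    push_cast
    ring

/-- The sum `Q(p, q)`. -/
noncomputable def QQ (p q : ℕ) : ℚ := ∑ s ∈ Ico 1 p, bb s * bb (p - s) / (s + q)

theorem K_QQ (p q : ℕ) (hp : 0 < p) (hq : 0 < q) :
    ∑ s ∈ range (p + 1), q * bb q * bb s / (s + q) * bb (p - s) =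
      bb p * bb q + q * bb q * QQ p q + q * bb q * bb p / (p + q) := by
  have : (q : ℚ) ≠ 0 := by positivity
  rw [Finset.sum_range_succ, Finset.range_eq_Ico, Finset.sum_eq_sum_Ico_succ_bot hp, QQ,
    Finset.mul_sum]
  congr 1
  · congr 1
    · simp [bb_zero]; field_simp
    · refine Finset.sum_congr rfl fun s _ => ?_
      ring
  · simp [bb_zero]

theorem bb_add (p q : ℕ) (hp : 0 < p) (hq : 0 < q) :
    bb (p + q) = 2 * bb p * bb q + q * bb q * QQ p q + p * bb p * QQ q p := by
  have h1 := K_QQ p q hp hq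
  have h2 := K_QQ q p hq hp
  rw [K_eval p q hq] at h1
  rw [K_eval q p hp] at h2
  have h3 : bb (p + q) = ∑ k ∈ range (p + q + 1), (p : ℚ) ^ k / (k.factorial : ℚ) *
      ((q : ℚ) ^ (p + q - k) / ((p + q - k).factorial : ℚ)) := by
    have hf : ((p + q).factorial : ℚ) ≠ 0 := by positivity
    rw [bb, Nat.cast_add, add_pow, Finset.sum_div]
    refine Finset.sum_congr rfl fun k hk => ?_
    have hk' : k ≤ p + q := by simpa [Nat.lt_succ_iff] using hk
    rw [Nat.cast_choose ℚ hk']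
    field_simp
  rw [add_assoc p q 1, Finset.sum_range_add] at h3
  have h4 : ∑ j ∈ range (p + 1), (q : ℚ) ^ (q + j) / ((q + j).factorial : ℚ) *
      ((p : ℚ) ^ (p - j) / ((p - j).factorial : ℚ)) =
      ∑ k ∈ range p, (p : ℚ) ^ k / (k.factorial : ℚ) *
      ((q : ℚ) ^ (p + q - k) / ((p + q - k).factorial : ℚ)) + bb p * bb q := by
    rw [← Finset.sum_range_reflect, Finset.sum_range_succ]
    congr 1
    · refine Finset.sum_congr rfl fun k hk => ?_
      have := Finset.mem_range.mp hk
      have e1 : q + (p + 1 - 1 - k) = p + q - k := by omega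
      have e2 : p - (p + 1 - 1 - k) = k := by omega
      rw [e1, e2, mul_comm]
    · simp [bb, mul_comm]
  have h5 : ∑ x ∈ range (q + 1), (p : ℚ) ^ (p + x) / ((p + x).factorial : ℚ) *
      ((q : ℚ) ^ (p + q - (p + x)) / ((p + q - (p + x)).factorial : ℚ)) =
      ∑ j ∈ range (q + 1), (p : ℚ) ^ (p + j) / ((p + j).factorial : ℚ) *
      ((q : ℚ) ^ (q - j) / ((q - j).factorial : ℚ)) := by
    refine Finset.sum_congr rfl fun k hk => ?_
    rw [show p + q - (p + k) = q - k by omega]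
  rw [h5] at h3
  have h6 : (q : ℚ) * bb q * bb p / (p + q) + p * bb p * bb q / (q + p) = bb p * bb q := by
    have : (p : ℚ) + q ≠ 0 := by positivity
    have : (q : ℚ) + p ≠ 0 := by positivity
    field_simp
    ring
  linarith

theorem bb_conv (p : ℕ) (hp : 0 < p) :
    ∑ s ∈ Ico 1 p, bb s * bb (p - s) / s = bb p - bb p / p := by
  have h := sum_cc 1 p (by norm_num) hp
  rw [Finset.sum_range_succ, Finset.range_eq_Ico, Finset.sum_eq_sum_Ico_succ_bot hp] at h
  have e1 : cc 1 0 = 0 := by simp [cc]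
  have hc : ∀ s, 0 < s → cc 1 s = bb s / s := by
    intro s hs
    obtain ⟨t, rfl⟩ : ∃ t, s = t + 1 := ⟨s - 1, by omega⟩
    have : (t : ℚ) + 1 ≠ 0 := by positivity
    simp [cc, bb, Nat.factorial_succ]
    field_simp
    ring
  have e2 : (p : ℚ) ^ (p - 1) / ((p - 1).factorial : ℚ) = bb p := by
    obtain ⟨t, rfl⟩ : ∃ t, p = t + 1 := ⟨p - 1, by omega⟩
    have : (t : ℚ) + 1 ≠ 0 := by positivity
    simp [bb, Nat.factorial_succ]
    field_simp
    ring
  rw [e1, e2, hc p hp] at h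
  simp only [zero_mul, zero_add, Nat.sub_self, bb_zero, mul_one] at h
  refine Eq.trans ?_ (eq_sub_of_add_eq h)
  refine Finset.sum_congr rfl fun s hs => ?_
  have := (Finset.mem_Ico.mp hs).1
  rw [hc s (by omega)]
  ring

end Hurw

namespace Hurw

open Finset

/-- The weight of a cycle. -/
noncomputable def ww (s : ℕ) : ℚ := s * bb s

theorem ww_pos (s : ℕ) (hs : 0 < s) : 0 < ww s := by
  have := bb_pos s
  unfold ww; positivity

theorem sum_reflect_Ico (p : ℕ) (f : ℕ → ℕ → ℚ) :
    ∑ s ∈ Ico 1 p, f s (p - s) = ∑ s ∈ Ico 1 p, f (p - s) s := by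
  refine Finset.sum_bij' (fun s _ => p - s) (fun s _ => p - s) ?_ ?_ ?_ ?_ ?_
  · intro s hs; simp only [Finset.mem_Ico] at hs ⊢; omega
  · intro s hs; simp only [Finset.mem_Ico] at hs ⊢; omega
  · intro s hs; simp only [Finset.mem_Ico] at hs; omega
  · intro s hs; simp only [Finset.mem_Ico] at hs; omega
  · intro s hs; simp only [Finset.mem_Ico] at hs
    rw [show p - (p - s) = s by omega]

theorem cut_sum {ι : Type*} [DecidableEq ι] (J : Finset ι) (μ : ι → ℕ) (hμ : ∀ i, 0 < μ i)
    (p : ℕ) (hp : 0 < p) (n : ℚ) (hn : n = p + ∑ i ∈ J, (μ i : ℚ)) :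
    ∑ s ∈ Ico 1 p, ww s * ww (p - s) * ∑ S ∈ J.powerset,
      ((s : ℚ) + ∑ i ∈ S, (μ i : ℚ)) ^ ((#S : ℤ) - 2) *
      (((p - s : ℕ) : ℚ) + ∑ i ∈ J \ S, (μ i : ℚ)) ^ ((#(J \ S) : ℤ) - 2) =
    2 * bb p * (p - 1) * n ^ ((#J : ℤ) - 2) -
      2 * n ^ ((#J : ℤ) - 3) * ∑ j ∈ J, μ j * ((p + μ j) * QQ p (μ j)) := by
  have hp' : (0 : ℚ) < p := by exact_mod_cast hp
  have hn0 : n ≠ 0 := by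
    have : (0 : ℚ) ≤ ∑ i ∈ J, (μ i : ℚ) := Finset.sum_nonneg fun i _ => by positivity
    rw [hn]; positivity
  have hz : ∀ i, (0 : ℚ) < (μ i : ℚ) := fun i => by exact_mod_cast hμ i
  set c := bb p - bb p / p with hc
  have conv1 : ∑ s ∈ Ico 1 p, bb s * bb (p - s) / s = c := bb_conv p hp
  have conv2 : ∑ s ∈ Ico 1 p, bb s * bb (p - s) / ((p - s : ℕ) : ℚ) = c := by
    rw [sum_reflect_Ico p (fun s t => bb s * bb t / (t : ℚ)), ← conv1]
    exact Finset.sum_congr rfl fun s _ => by ring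
  have Q2 : ∀ q : ℕ, ∑ s ∈ Ico 1 p, bb s * bb (p - s) / (((p - s : ℕ) : ℚ) + q) = QQ p q := by
    intro q
    rw [sum_reflect_Ico p (fun s t => bb s * bb t / ((t : ℚ) + q)), QQ]
    exact Finset.sum_congr rfl fun s _ => by ring
  set N1 := n ^ ((#J : ℤ) - 1)
  set N2 := n ^ ((#J : ℤ) - 2) with hN2
  set N3 := n ^ ((#J : ℤ) - 3) with hN3
  have hN12 : N1 = N2 * n := by
    simp only [N1, N2]; rw [← zpow_add_one₀ hn0]; congr 1; ring
  have hN23 : N2 = N3 * n := by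
    simp only [N3, N2]; rw [← zpow_add_one₀ hn0]; congr 1; ring
  have step : ∀ s ∈ Ico 1 p, ww s * ww (p - s) * ∑ S ∈ J.powerset,
      ((s : ℚ) + ∑ i ∈ S, (μ i : ℚ)) ^ ((#S : ℤ) - 2) *
      (((p - s : ℕ) : ℚ) + ∑ i ∈ J \ S, (μ i : ℚ)) ^ ((#(J \ S) : ℤ) - 2) =
      N1 * (bb s * bb (p - s) / s + bb s * bb (p - s) / ((p - s : ℕ) : ℚ))
      - N2 * (∑ j ∈ J, μ j * (bb s * bb (p - s) / ((p - s : ℕ) : ℚ) + bb s * bb (p - s) / (s + μ j)))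
      - N2 * (∑ j ∈ J, μ j * (bb s * bb (p - s) / s + bb s * bb (p - s) / (((p - s : ℕ) : ℚ) + μ j)))
      + N3 * (∑ i ∈ J, ∑ j ∈ J.erase i, μ i * μ j * (bb s * bb (p - s) / (s + μ i) +
          bb s * bb (p - s) / (((p - s : ℕ) : ℚ) + μ j))) := by
    intro s hs
    rw [Finset.mem_Ico] at hs
    have hs1 : (0 : ℚ) < (s : ℚ) := by exact_mod_cast hs.1
    have ht1 : (0 : ℚ) < ((p - s : ℕ) : ℚ) := by
      have : 0 < p - s := by omega
      exact_mod_cast this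
    have hst : (p : ℚ) = s + ((p - s : ℕ) : ℚ) := by
      have : p = s + (p - s) := by omega
      exact_mod_cast this
    set t : ℚ := ((p - s : ℕ) : ℚ) with ht
    have h := abel_cut (fun i => (μ i : ℚ)) hz s t hs1 ht1 J n (by rw [hn, hst])
    have h' : ww s * ww (p - s) * ∑ S ∈ J.powerset,
      ((s : ℚ) + ∑ i ∈ S, (μ i : ℚ)) ^ ((#S : ℤ) - 2) *
      (t + ∑ i ∈ J \ S, (μ i : ℚ)) ^ ((#(J \ S) : ℤ) - 2) =
      bb s * bb (p - s) / (s * t) * ∑ S ∈ J.powerset,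
      ((s : ℚ) ^ 2 * ((s : ℚ) + ∑ i ∈ S, (μ i : ℚ)) ^ ((#S : ℤ) - 2)) *
      (t ^ 2 * (t + ∑ i ∈ J \ S, (μ i : ℚ)) ^ ((#(J \ S) : ℤ) - 2)) := by
      rw [Finset.mul_sum, Finset.mul_sum]
      refine Finset.sum_congr rfl fun S _ => ?_
      unfold ww
      rw [← ht]
      field_simp
    rw [h', h]
    rw [mul_add, mul_sub, mul_sub]
    congr 1
    · congr 1
      · congr 1
        · simp only [N1]
          field_simp
          ring
        · rw [Finset.mul_sum, Finset.mul_sum]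
          refine Finset.sum_congr rfl fun j _ => ?_
          have := hz j
          simp only [hN2]
          field_simp
          ring
      · rw [Finset.mul_sum, Finset.mul_sum]
        refine Finset.sum_congr rfl fun j _ => ?_
        have := hz j
        simp only [hN2]
        field_simp
        ring
    · rw [Finset.mul_sum, Finset.mul_sum]
      refine Finset.sum_congr rfl fun i _ => ?_
      rw [Finset.mul_sum, Finset.mul_sum]
      refine Finset.sum_congr rfl fun j _ => ?_
      have := hz j
      have := hz i
      simp only [hN3]
      field_simp
      ring
  rw [Finset.sum_congr rfl step]
  simp only [Finset.sum_add_distrib, Finset.sum_sub_distrib, ← Finset.mul_sum]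
  rw [conv1, conv2]
  have s1 : ∑ s ∈ Ico 1 p, ∑ j ∈ J, (μ j : ℚ) * (bb s * bb (p - s) / ((p - s : ℕ) : ℚ) +
      bb s * bb (p - s) / (s + μ j)) = ∑ j ∈ J, μ j * (c + QQ p (μ j)) := by
    rw [Finset.sum_comm]
    refine Finset.sum_congr rfl fun j _ => ?_
    rw [← Finset.mul_sum, Finset.sum_add_distrib, conv2, QQ]
  have s2 : ∑ s ∈ Ico 1 p, ∑ j ∈ J, (μ j : ℚ) * (bb s * bb (p - s) / s +
      bb s * bb (p - s) / (((p - s : ℕ) : ℚ) + μ j)) = ∑ j ∈ J, μ j * (c + QQ p (μ j)) := by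
    rw [Finset.sum_comm]
    refine Finset.sum_congr rfl fun j _ => ?_
    rw [← Finset.mul_sum, Finset.sum_add_distrib, conv1, Q2]
  have s3 : ∑ s ∈ Ico 1 p, ∑ i ∈ J, ∑ j ∈ J.erase i, (μ i : ℚ) * μ j *
      (bb s * bb (p - s) / (s + μ i) + bb s * bb (p - s) / (((p - s : ℕ) : ℚ) + μ j)) =
      ∑ i ∈ J, ∑ j ∈ J.erase i, (μ i : ℚ) * μ j * (QQ p (μ i) + QQ p (μ j)) := by
    rw [Finset.sum_comm]
    refine Finset.sum_congr rfl fun i _ => ?_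
    rw [Finset.sum_comm]
    refine Finset.sum_congr rfl fun j _ => ?_
    rw [← Finset.mul_sum, Finset.sum_add_distrib, Q2]
    rfl
  rw [s1, s2, s3]
  have swap : ∀ f : ι → ι → ℚ, ∑ i ∈ J, ∑ j ∈ J.erase i, f i j = ∑ i ∈ J, ∑ j ∈ J.erase i, f j i := by
    intro f
    rw [Finset.sum_comm' (t' := J) (s' := fun j => J.erase j)]
    intro x y
    simp only [Finset.mem_erase]
    tauto
  have s4 : ∑ i ∈ J, ∑ j ∈ J.erase i, (μ i : ℚ) * μ j * (QQ p (μ i) + QQ p (μ j)) =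
      2 * ∑ i ∈ J, (μ i : ℚ) * QQ p (μ i) * (n - p - μ i) := by
    have : ∑ i ∈ J, ∑ j ∈ J.erase i, (μ i : ℚ) * μ j * (QQ p (μ i) + QQ p (μ j)) =
       2 * ∑ i ∈ J, ∑ j ∈ J.erase i, (μ i : ℚ) * μ j * QQ p (μ i) := by
      simp only [mul_add, Finset.sum_add_distrib]
      rw [swap (fun i j => (μ i : ℚ) * μ j * QQ p (μ j)), two_mul]
      congr 1
      exact Finset.sum_congr rfl fun i _ => Finset.sum_congr rfl fun j _ => by ring
    rw [this]
    congr 1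
    refine Finset.sum_congr rfl fun i hi => ?_
    have : n - p - μ i = ∑ j ∈ J.erase i, (μ j : ℚ) := by
      rw [hn, ← Finset.add_sum_erase J _ hi]; ring
    rw [this, Finset.mul_sum]
    exact Finset.sum_congr rfl fun j _ => by ring
  rw [s4]
  have s5 : ∑ i ∈ J, (μ i : ℚ) * QQ p (μ i) * (n - p - μ i) =
      n * ∑ i ∈ J, (μ i : ℚ) * QQ p (μ i) - ∑ j ∈ J, μ j * ((p + μ j) * QQ p (μ j)) := by
    rw [Finset.mul_sum, ← Finset.sum_sub_distrib]
    exact Finset.sum_congr rfl fun j _ => by ring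
  have s6 : ∑ j ∈ J, μ j * (c + QQ p (μ j)) = (n - p) * c + ∑ i ∈ J, (μ i : ℚ) * QQ p (μ i) := by
    rw [show n - p = ∑ i ∈ J, (μ i : ℚ) by rw [hn]; ring, Finset.sum_mul, ← Finset.sum_add_distrib]
    exact Finset.sum_congr rfl fun j _ => by ring
  have hcp : c * p = bb p * (p - 1) := by rw [hc]; field_simp
  rw [s5, s6, hN12, hN23]
  linear_combination (2 * N3 * n) * hcp

theorem block_identity_aux {ι : Type*} [DecidableEq ι] (I : Finset ι) (μ : ι → ℕ)
    (hμ : ∀ i, 0 < μ i) (hI : I.Nonempty) (n : ℚ) (hn : n = ∑ i ∈ I, (μ i : ℚ)) :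
    ∑ i ∈ I, (μ i : ℚ) * (∑ j ∈ I.erase i, μ j * (n ^ ((#I : ℤ) - 4) *
        (ww (μ i + μ j) / (ww (μ i) * ww (μ j)))) +
      ∑ s ∈ Ico 1 (μ i), ww s * ww (μ i - s) / ww (μ i) * ∑ S ∈ (I.erase i).powerset,
      ((s : ℚ) + ∑ i ∈ S, (μ i : ℚ)) ^ ((#S : ℤ) - 2) *
      (((μ i - s : ℕ) : ℚ) + ∑ j ∈ I.erase i \ S, (μ j : ℚ)) ^ ((#(I.erase i \ S) : ℤ) - 2)) =
    2 * (n + #I - 2) * n ^ ((#I : ℤ) - 3) := by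
  have hz : ∀ i, (0 : ℚ) < (μ i : ℚ) := fun i => by exact_mod_cast hμ i
  have hn0 : n ≠ 0 := by
    have : (0 : ℚ) < ∑ i ∈ I, (μ i : ℚ) := Finset.sum_pos (fun i _ => hz i) hI
    rw [hn]; exact this.ne'
  set N3 := n ^ ((#I : ℤ) - 3) with hN3
  set N4 := n ^ ((#I : ℤ) - 4) with hN4
  have hN34 : N3 = N4 * n := by
    simp only [N3, N4]; rw [← zpow_add_one₀ hn0]; congr 1; ring
  have step : ∀ i ∈ I, (μ i : ℚ) * (∑ j ∈ I.erase i, μ j * (N4 *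
        (ww (μ i + μ j) / (ww (μ i) * ww (μ j)))) +
      ∑ s ∈ Ico 1 (μ i), ww s * ww (μ i - s) / ww (μ i) * ∑ S ∈ (I.erase i).powerset,
      ((s : ℚ) + ∑ i ∈ S, (μ i : ℚ)) ^ ((#S : ℤ) - 2) *
      (((μ i - s : ℕ) : ℚ) + ∑ j ∈ I.erase i \ S, (μ j : ℚ)) ^ ((#(I.erase i \ S) : ℤ) - 2)) =
      2 * (μ i - 1) * N3 + N4 * ∑ j ∈ I.erase i, (2 * (μ i + μ j) +
        (μ i + μ j) * (μ i * QQ (μ j) (μ i) / bb (μ j)) -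
        (μ i + μ j) * (μ j * QQ (μ i) (μ j) / bb (μ i))) := by
    intro i hi
    have hcs := cut_sum (I.erase i) μ hμ (μ i) (hμ i) n
      (by rw [hn, ← Finset.add_sum_erase I _ hi])
    have hcard : (#(I.erase i) : ℤ) = #I - 1 := by
      rw [Finset.card_erase_of_mem hi, Nat.cast_sub (Finset.card_pos.mpr hI)]; rfl
    rw [hcard, show (#I : ℤ) - 1 - 2 = #I - 3 by ring, show (#I : ℤ) - 1 - 3 = #I - 4 by ring,
      ← hN3, ← hN4] at hcs
    have e1 : ∑ s ∈ Ico 1 (μ i), ww s * ww (μ i - s) / ww (μ i) * ∑ S ∈ (I.erase i).powerset,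
      ((s : ℚ) + ∑ i ∈ S, (μ i : ℚ)) ^ ((#S : ℤ) - 2) *
      (((μ i - s : ℕ) : ℚ) + ∑ j ∈ I.erase i \ S, (μ j : ℚ)) ^ ((#(I.erase i \ S) : ℤ) - 2) =
      (2 * bb (μ i) * (μ i - 1) * N3 -
      2 * N4 * ∑ j ∈ I.erase i, μ j * ((μ i + μ j) * QQ (μ i) (μ j))) / ww (μ i) := by
      rw [← hcs, Finset.sum_div]
      refine Finset.sum_congr rfl fun s _ => ?_
      ring
    rw [e1]
    have hi0 := hz i
    have hb := bb_pos (μ i)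
    have e2 : (μ i : ℚ) * ((2 * bb (μ i) * (μ i - 1) * N3 -
      2 * N4 * ∑ j ∈ I.erase i, μ j * ((μ i + μ j) * QQ (μ i) (μ j))) / ww (μ i)) =
      2 * (μ i - 1) * N3 - N4 * ∑ j ∈ I.erase i,
        2 * ((μ i + μ j) * (μ j * QQ (μ i) (μ j) / bb (μ i))) := by
      have : ∑ j ∈ I.erase i, 2 * (((μ i : ℚ) + μ j) * (μ j * QQ (μ i) (μ j) / bb (μ i))) =
          2 / bb (μ i) * ∑ j ∈ I.erase i, μ j * ((μ i + μ j) * QQ (μ i) (μ j)) := by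
        rw [Finset.mul_sum]
        exact Finset.sum_congr rfl fun j _ => by ring
      rw [this]
      unfold ww
      field_simp
    rw [mul_add, e2, Finset.mul_sum]
    have e3 : ∀ j ∈ I.erase i, (μ i : ℚ) * (μ j * (N4 *
        (ww (μ i + μ j) / (ww (μ i) * ww (μ j))))) = N4 * (2 * (μ i + μ j) +
        (μ i + μ j) * (μ i * QQ (μ j) (μ i) / bb (μ j)) +
        (μ i + μ j) * (μ j * QQ (μ i) (μ j) / bb (μ i))) := by
      intro j _
      have hj0 := hz j
      have hbj := bb_pos (μ j)
      unfold ww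
      rw [bb_add _ _ (hμ i) (hμ j)]
      push_cast
      field_simp
      ring
    rw [Finset.sum_congr rfl e3, ← Finset.mul_sum]
    have e4 : ∑ j ∈ I.erase i, (2 * ((μ i : ℚ) + μ j) +
        (μ i + μ j) * (μ i * QQ (μ j) (μ i) / bb (μ j)) -
        (μ i + μ j) * (μ j * QQ (μ i) (μ j) / bb (μ i))) =
        ∑ j ∈ I.erase i, (2 * ((μ i : ℚ) + μ j) +
        (μ i + μ j) * (μ i * QQ (μ j) (μ i) / bb (μ j)) +
        (μ i + μ j) * (μ j * QQ (μ i) (μ j) / bb (μ i))) - ∑ j ∈ I.erase i,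
        2 * ((μ i + μ j) * (μ j * QQ (μ i) (μ j) / bb (μ i))) := by
      rw [← Finset.sum_sub_distrib]
      exact Finset.sum_congr rfl fun j _ => by ring
    rw [e4]
    ring
  rw [Finset.sum_congr rfl step, Finset.sum_add_distrib, ← Finset.mul_sum]
  have swap : ∀ f : ι → ι → ℚ, ∑ i ∈ I, ∑ j ∈ I.erase i, f i j = ∑ i ∈ I, ∑ j ∈ I.erase i, f j i := by
    intro f
    rw [Finset.sum_comm' (t' := I) (s' := fun j => I.erase j)]
    intro x y
    simp only [Finset.mem_erase]
    tauto
  simp only [Finset.sum_add_distrib, Finset.sum_sub_distrib]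
  rw [swap (fun i j => ((μ i : ℚ) + μ j) * (μ i * QQ (μ j) (μ i) / bb (μ j)))]
  have t1 : ∑ i ∈ I, 2 * ((μ i : ℚ) - 1) * N3 = 2 * (n - #I) * N3 := by
    rw [← Finset.sum_mul, ← Finset.mul_sum, Finset.sum_sub_distrib, ← hn]; simp
  have t2 : ∑ i ∈ I, ∑ j ∈ I.erase i, 2 * ((μ i : ℚ) + μ j) = 4 * (#I - 1) * n := by
    simp only [← Finset.mul_sum, Finset.sum_add_distrib]
    rw [swap (fun i j => (μ j : ℚ))]
    have : ∑ i ∈ I, ∑ j ∈ I.erase i, (μ i : ℚ) = (#I - 1) * n := by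
      rw [hn, Finset.mul_sum]
      refine Finset.sum_congr rfl fun i hi => ?_
      rw [Finset.sum_const, Finset.card_erase_of_mem hi, nsmul_eq_mul,
        Nat.cast_sub (Finset.card_pos.mpr hI)]; simp
    rw [this]; ring
  have t3 : ∀ i j : ι, ((μ j : ℚ) + μ i) * (μ j * QQ (μ i) (μ j) / bb (μ i)) =
      ((μ i : ℚ) + μ j) * (μ j * QQ (μ i) (μ j) / bb (μ i)) := by intro i j; ring
  simp only [t3]
  rw [t1, t2, hN34]
  ring

theorem block_identity {ι : Type*} [DecidableEq ι] (I : Finset ι) (μ : ι → ℕ)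
    (hμ : ∀ i ∈ I, 0 < μ i) (hI : I.Nonempty) (n : ℚ) (hn : n = ∑ i ∈ I, (μ i : ℚ)) :
    ∑ i ∈ I, (μ i : ℚ) * (∑ j ∈ I.erase i, μ j * (n ^ ((#I : ℤ) - 4) *
        (ww (μ i + μ j) / (ww (μ i) * ww (μ j)))) +
      ∑ s ∈ Ico 1 (μ i), ww s * ww (μ i - s) / ww (μ i) * ∑ S ∈ (I.erase i).powerset,
      ((s : ℚ) + ∑ i ∈ S, (μ i : ℚ)) ^ ((#S : ℤ) - 2) *
      (((μ i - s : ℕ) : ℚ) + ∑ j ∈ I.erase i \ S, (μ j : ℚ)) ^ ((#(I.erase i \ S) : ℤ) - 2)) =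
    2 * (n + #I - 2) * n ^ ((#I : ℤ) - 3) := by
  set ν : ι → ℕ := fun i => if i ∈ I then μ i else 1 with hν
  have hνμ : ∀ i ∈ I, ν i = μ i := fun i hi => by simp [hν, hi]
  have hν0 : ∀ i, 0 < ν i := by
    intro i; simp only [hν]; split_ifs with h
    · exact hμ i h
    · norm_num
  have := block_identity_aux I ν hν0 hI n
    (by rw [hn]; exact Finset.sum_congr rfl fun i hi => by rw [hνμ i hi])
  rw [← this]
  refine Finset.sum_congr rfl fun i hi => ?_
  rw [hνμ i hi]
  congr 2
  · refine Finset.sum_congr rfl fun j hj => ?_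
    rw [hνμ j (Finset.mem_of_mem_erase hj)]
  · refine Finset.sum_congr rfl fun s _ => ?_
    congr 1
    refine Finset.sum_congr rfl fun S hS => ?_
    have hS' : S ⊆ I := (Finset.mem_powerset.mp hS).trans (Finset.erase_subset _ _)
    have a1 : ∑ i ∈ S, (μ i : ℚ) = ∑ i ∈ S, (ν i : ℚ) :=
      Finset.sum_congr rfl fun j hj => by rw [hνμ j (hS' hj)]
    have a2 : ∑ j ∈ I.erase i \ S, (μ j : ℚ) = ∑ j ∈ I.erase i \ S, (ν j : ℚ) :=
      Finset.sum_congr rfl fun j hj => by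
        rw [hνμ j (Finset.mem_of_mem_erase (Finset.mem_sdiff.mp hj).1)]
    rw [a1, a2]

end Hurw

namespace Hurw

open Finset

open Classical in
/-- The class of `x` as a finset. -/
noncomputable def cls {α : Type*} [Fintype α] (P : Setoid α) (x : α) : Finset α :=
  univ.filter (fun y => P x y)

open Classical in
/-- The finset of classes of a setoid. -/
noncomputable def blocks {α : Type*} [Fintype α] (P : Setoid α) : Finset (Finset α) :=
  univ.image (cls P)

/-- The equivalence relation which identifies `a` and `b` only. -/
def link {α : Type*} (a b : α) : Setoid α where
  r x y := x = y ∨ (x = a ∧ y = b) ∨ (x = b ∧ y = a)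
  iseqv := by
    constructor
    · intro x; exact Or.inl rfl
    · intro x y h; rcases h with h | h | h
      · exact Or.inl h.symm
      · exact Or.inr (Or.inr ⟨h.2, h.1⟩)
      · exact Or.inr (Or.inl ⟨h.2, h.1⟩)
    · intro x y z h1 h2
      grind

section
variable {α : Type*} [Fintype α]

theorem mem_cls {P : Setoid α} {x y : α} : y ∈ cls P x ↔ P x y := by
  classical
  simp [cls]

theorem self_mem_cls (P : Setoid α) (x : α) : x ∈ cls P x := mem_cls.mpr (P.refl x)

theorem cls_eq_iff {P : Setoid α} {x y : α} : cls P x = cls P y ↔ P x y := by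
  constructor
  · intro h
    rw [← mem_cls, h]; exact self_mem_cls P y
  · intro h
    ext z
    rw [mem_cls, mem_cls]
    exact ⟨fun h' => P.trans (P.symm h) h', fun h' => P.trans h h'⟩

theorem cls_mem_blocks (P : Setoid α) (x : α) : cls P x ∈ blocks P := by
  classical
  simp [blocks]

theorem mem_blocks {P : Setoid α} {C : Finset α} : C ∈ blocks P ↔ ∃ x, cls P x = C := by
  classical
  simp [blocks]

theorem eq_cls_of_mem {P : Setoid α} {C : Finset α} (hC : C ∈ blocks P) {x : α} (hx : x ∈ C) :
    C = cls P x := by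
  obtain ⟨y, rfl⟩ := mem_blocks.mp hC
  exact cls_eq_iff.mpr (mem_cls.mp hx)

theorem card_pos_of_mem_blocks {P : Setoid α} {C : Finset α} (hC : C ∈ blocks P) : 0 < #C := by
  obtain ⟨y, rfl⟩ := mem_blocks.mp hC
  exact Finset.card_pos.mpr ⟨y, self_mem_cls P y⟩

theorem sup_link_rel (P : Setoid α) (a b x y : α) :
    (P ⊔ link a b) x y ↔ P x y ∨ (P x a ∧ P b y) ∨ (P x b ∧ P a y) := by
  constructor
  · intro h
    let R : Setoid α :=
      { r := fun x y => P x y ∨ (P x a ∧ P b y) ∨ (P x b ∧ P a y)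
        iseqv := by
          constructor
          · intro x; exact Or.inl (P.refl x)
          · intro x y h
            rcases h with h | h | h
            · exact Or.inl (P.symm h)
            · exact Or.inr (Or.inr ⟨P.symm h.2, P.symm h.1⟩)
            · exact Or.inr (Or.inl ⟨P.symm h.2, P.symm h.1⟩)
          · intro x y z h1 h2
            rcases h1 with h1 | ⟨h1, h1'⟩ | ⟨h1, h1'⟩
            · rcases h2 with h2 | ⟨h2, h2'⟩ | ⟨h2, h2'⟩
              · exact Or.inl (P.trans h1 h2)
              · exact Or.inr (Or.inl ⟨P.trans h1 h2, h2'⟩)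
              · exact Or.inr (Or.inr ⟨P.trans h1 h2, h2'⟩)
            · rcases h2 with h2 | ⟨h2, h2'⟩ | ⟨h2, h2'⟩
              · exact Or.inr (Or.inl ⟨h1, P.trans h1' h2⟩)
              · exact Or.inr (Or.inl ⟨h1, h2'⟩)
              · exact Or.inl (P.trans h1 h2')
            · rcases h2 with h2 | ⟨h2, h2'⟩ | ⟨h2, h2'⟩
              · exact Or.inr (Or.inr ⟨h1, P.trans h1' h2⟩)
              · exact Or.inl (P.trans h1 h2')
              · exact Or.inr (Or.inr ⟨h1, h2'⟩) }
    have hle : P ⊔ link a b ≤ R := by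
      refine sup_le (fun {x y} h => Or.inl h) (fun {x y} h => ?_)
      rcases h with rfl | ⟨rfl, rfl⟩ | ⟨rfl, rfl⟩
      · exact R.refl _
      · exact Or.inr (Or.inl ⟨P.refl _, P.refl _⟩)
      · exact Or.inr (Or.inr ⟨P.refl _, P.refl _⟩)
    exact hle h
  · have h1 : P ≤ P ⊔ link a b := le_sup_left
    have h2 : link a b ≤ P ⊔ link a b := le_sup_right
    have hab : (P ⊔ link a b) a b := h2 (Or.inr (Or.inl ⟨rfl, rfl⟩))
    rintro (h | ⟨h, h'⟩ | ⟨h, h'⟩)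
    · exact h1 h
    · exact Setoid.trans' _ (h1 h) (Setoid.trans' _ hab (h1 h'))
    · exact Setoid.trans' _ (h1 h) (Setoid.trans' _ (Setoid.symm' _ hab) (h1 h'))

theorem link_le_iff (P : Setoid α) (a b : α) : link a b ≤ P ↔ P a b := by
  constructor
  · intro h; exact h (Or.inr (Or.inl ⟨rfl, rfl⟩))
  · intro h x y hxy
    rcases hxy with rfl | ⟨rfl, rfl⟩ | ⟨rfl, rfl⟩
    · exact P.refl _
    · exact h
    · exact P.symm h

theorem link_comm (a b : α) : link a b = link b a := by
  ext x y
  show (x = y ∨ (x = a ∧ y = b) ∨ (x = b ∧ y = a)) ↔ (x = y ∨ (x = b ∧ y = a) ∨ (x = a ∧ y = b))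
  tauto

/-- `P` arises from `P'` by merging the distinct classes of `a` and `b`. -/
structure Merges (P' P : Setoid α) (a b : α) : Prop where
  eq : P = P' ⊔ link a b
  sep : ¬ P' a b

namespace Merges
variable {P' P : Setoid α} {a b : α}

theorem rel (h : Merges P' P a b) (x y : α) :
    P x y ↔ P' x y ∨ (P' x a ∧ P' b y) ∨ (P' x b ∧ P' a y) := by
  rw [h.eq]; exact sup_link_rel P' a b x y

theorem le (h : Merges P' P a b) : P' ≤ P := by rw [h.eq]; exact le_sup_left

theorem rel_ab (h : Merges P' P a b) : P a b :=
  (h.rel a b).mpr (Or.inr (Or.inl ⟨P'.refl a, P'.refl b⟩))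

theorem symm (h : Merges P' P a b) : Merges P' P b a :=
  ⟨by rw [h.eq, link_comm], fun h' => h.sep (P'.symm h')⟩

theorem cls_union [DecidableEq α] (h : Merges P' P a b) : cls P a = cls P' a ∪ cls P' b := by
  ext y
  rw [Finset.mem_union, mem_cls, mem_cls, mem_cls, h.rel]
  have := h.sep
  have := P'.refl a
  tauto

theorem disj (h : Merges P' P a b) : Disjoint (cls P' a) (cls P' b) := by
  rw [Finset.disjoint_left]
  intro x hx hx'
  rw [mem_cls] at hx hx'
  exact h.sep (P'.trans hx (P'.symm hx'))

theorem card_cls (h : Merges P' P a b) : #(cls P a) = #(cls P' a) + #(cls P' b) := by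
  classical
  rw [h.cls_union, Finset.card_union_of_disjoint h.disj]

theorem cls_other (h : Merges P' P a b) {x : α} (hx : ¬ P a x) : cls P x = cls P' x := by
  ext y
  rw [mem_cls, mem_cls, h.rel]
  constructor
  · rintro (h1 | ⟨h1, h2⟩ | ⟨h1, h2⟩)
    · exact h1
    · exact absurd (P.symm (h.le h1)) hx
    · exact absurd (P.trans h.rel_ab (P.symm (h.le h1))) hx
  · exact Or.inl

theorem blocks_eq [DecidableEq α] (h : Merges P' P a b) :
    blocks P' = insert (cls P' a) (insert (cls P' b) ((blocks P).erase (cls P a))) := by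
  ext C
  simp only [Finset.mem_insert, Finset.mem_erase, mem_blocks]
  constructor
  · rintro ⟨x, rfl⟩
    by_cases hx : P a x
    · rw [← mem_cls, h.cls_union, Finset.mem_union, mem_cls, mem_cls] at hx
      rcases hx with hx | hx
      · exact Or.inl (cls_eq_iff.mpr (P'.symm hx))
      · exact Or.inr (Or.inl (cls_eq_iff.mpr (P'.symm hx)))
    · right; right
      rw [← h.cls_other hx]
      refine ⟨fun h' => hx (P.symm (cls_eq_iff.mp h')), x, rfl⟩
  · rintro (rfl | rfl | ⟨h1, x, rfl⟩)
    · exact ⟨a, rfl⟩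
    · exact ⟨b, rfl⟩
    · refine ⟨x, (h.cls_other fun h' => h1 (cls_eq_iff.mpr (P.symm h'))).symm⟩

theorem notMem_b [DecidableEq α] (h : Merges P' P a b) :
    cls P' b ∉ (blocks P).erase (cls P a) := by
  intro h'
  rw [Finset.mem_erase] at h'
  apply h'.1
  rw [eq_cls_of_mem h'.2 (self_mem_cls P' b)]
  exact cls_eq_iff.mpr (P.symm h.rel_ab)

theorem notMem_a [DecidableEq α] (h : Merges P' P a b) :
    cls P' a ∉ insert (cls P' b) ((blocks P).erase (cls P a)) := by
  rw [Finset.mem_insert, not_or]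
  exact ⟨fun h' => h.sep (cls_eq_iff.mp h'), h.symm.notMem_b ∘ by
    rw [cls_eq_iff.mpr h.rel_ab]; exact id⟩

theorem prod_blocks [DecidableEq α] (h : Merges P' P a b) {M : Type*} [CommMonoid M]
    (f : Finset α → M) : ∏ C ∈ blocks P', f C =
      f (cls P' a) * (f (cls P' b) * ∏ C ∈ (blocks P).erase (cls P a), f C) := by
  rw [h.blocks_eq, Finset.prod_insert h.notMem_a, Finset.prod_insert h.notMem_b]

theorem card_blocks (h : Merges P' P a b) : #(blocks P') = #(blocks P) + 1 := by
  classical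
  rw [h.blocks_eq, Finset.card_insert_of_notMem h.notMem_a,
    Finset.card_insert_of_notMem h.notMem_b, Finset.card_erase_of_mem (cls_mem_blocks P a)]
  have : 0 < #(blocks P) := Finset.card_pos.mpr ⟨_, cls_mem_blocks P a⟩
  omega

end Merges

open Classical in
/-- The classes of `Q` contained in `B`. -/
noncomputable def inB (Q : Setoid α) (B : Finset α) : Finset (Finset α) :=
  (blocks Q).filter (fun C => C ⊆ B)

theorem mem_inB {Q : Setoid α} {B C : Finset α} : C ∈ inB Q B ↔ C ∈ blocks Q ∧ C ⊆ B := by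
  classical
  simp [inB]

theorem sum_inB (Q : Setoid α) (B : Finset α) (hB : ∀ x ∈ B, cls Q x ⊆ B) {M : Type*}
    [AddCommMonoid M] (f : α → M) : ∑ a ∈ B, f a = ∑ C ∈ inB Q B, ∑ a ∈ C, f a := by
  classical
  rw [← Finset.sum_biUnion]
  · refine Finset.sum_congr ?_ fun _ _ => rfl
    ext x
    simp only [Finset.mem_biUnion, mem_inB]
    constructor
    · intro hx; exact ⟨cls Q x, ⟨cls_mem_blocks Q x, hB x hx⟩, self_mem_cls Q x⟩
    · rintro ⟨C, hC, hx⟩; exact hC.2 hx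
  · intro C hC D hD hne
    rw [Function.onFun, Finset.disjoint_left]
    intro x hx hx'
    apply hne
    rw [eq_cls_of_mem (mem_inB.mp hC).1 hx, eq_cls_of_mem (mem_inB.mp hD).1 hx']

theorem sum_blocks (P : Setoid α) {M : Type*} [AddCommMonoid M] (f : α → M) :
    ∑ a, f a = ∑ C ∈ blocks P, ∑ a ∈ C, f a := by
  rw [sum_inB P univ (fun _ _ => Finset.subset_univ _) f]
  refine Finset.sum_congr ?_ fun _ _ => rfl
  ext C; simp [mem_inB]

theorem inB_merge_of_notMem [DecidableEq α] {Q' Q : Setoid α} {a b : α} (h : Merges Q' Q a b) (B : Finset α)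
    (ha : a ∉ B) (hb : b ∉ B) : inB Q' B = inB Q B := by
  ext C
  rw [mem_inB, mem_inB, h.blocks_eq]
  simp only [Finset.mem_insert, Finset.mem_erase]
  constructor
  · rintro ⟨(rfl | rfl | h1), h2⟩
    · exact absurd (h2 (self_mem_cls Q' a)) ha
    · exact absurd (h2 (self_mem_cls Q' b)) hb
    · exact ⟨h1.2, h2⟩
  · rintro ⟨h1, h2⟩
    refine ⟨Or.inr (Or.inr ⟨?_, h1⟩), h2⟩
    rintro rfl
    exact ha (h2 (self_mem_cls Q a))

theorem inB_merge_of_mem [DecidableEq α] {Q' Q : Setoid α} {a b : α} (h : Merges Q' Q a b) (B : Finset α)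
    (hB : cls Q a ⊆ B) : #(inB Q' B) = #(inB Q B) + 1 := by
  have e : inB Q' B = insert (cls Q' a) (insert (cls Q' b) ((inB Q B).erase (cls Q a))) := by
    ext C
    have h1 : cls Q' a ⊆ B := by
      refine subset_trans ?_ hB; rw [h.cls_union]; exact Finset.subset_union_left
    have h2 : cls Q' b ⊆ B := by
      refine subset_trans ?_ hB; rw [h.cls_union]; exact Finset.subset_union_right
    rw [mem_inB, h.blocks_eq]
    simp only [Finset.mem_insert, Finset.mem_erase, mem_inB]
    constructor
    · tauto
    · rintro (rfl | rfl | h3)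
      · exact ⟨Or.inl rfl, h1⟩
      · exact ⟨Or.inr (Or.inl rfl), h2⟩
      · tauto
  have hsub : (inB Q B).erase (cls Q a) ⊆ (blocks Q).erase (cls Q a) :=
    Finset.erase_subset_erase _ fun C hC => (mem_inB.mp hC).1
  rw [e, Finset.card_insert_of_notMem, Finset.card_insert_of_notMem,
    Finset.card_erase_of_mem (mem_inB.mpr ⟨cls_mem_blocks Q a, hB⟩)]
  · have : 0 < #(inB Q B) := Finset.card_pos.mpr ⟨_, mem_inB.mpr ⟨cls_mem_blocks Q a, hB⟩⟩
    omega
  · exact fun h' => h.notMem_b (hsub h')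
  · exact fun h' => h.notMem_a (Finset.insert_subset_insert _ hsub h')

/-- The genus zero weight. -/
noncomputable def GG (Q P : Setoid α) : ℚ :=
  (∏ C ∈ blocks Q, ww #C) * ∏ B ∈ blocks P, (#B : ℚ) ^ ((#(inB Q B) : ℤ) - 3)

theorem cls_mono {Q P : Setoid α} (h : Q ≤ P) (x : α) : cls Q x ⊆ cls P x := by
  intro y hy; rw [mem_cls] at hy ⊢; exact h hy

theorem GG_join {Q Q2 P : Setoid α} {a b : α} (h : Merges Q Q2 a b) (hP : Q2 ≤ P) :
    GG Q2 P = GG Q P * (ww (#(cls Q a) + #(cls Q b)) / (ww #(cls Q a) * ww #(cls Q b)) *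
      (#(cls P a) : ℚ)⁻¹) := by
  classical
  have hwa := ww_pos _ (card_pos_of_mem_blocks (cls_mem_blocks Q a))
  have hwb := ww_pos _ (card_pos_of_mem_blocks (cls_mem_blocks Q b))
  have hPab : P a b := hP h.rel_ab
  have hn : (#(cls P a) : ℚ) ≠ 0 := by
    exact_mod_cast (card_pos_of_mem_blocks (cls_mem_blocks P a)).ne'
  unfold GG
  rw [h.prod_blocks, ← Finset.mul_prod_erase (blocks Q2) _ (cls_mem_blocks Q2 a), h.card_cls,
    ← Finset.mul_prod_erase (blocks P) _ (cls_mem_blocks P a),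
    ← Finset.mul_prod_erase (blocks P) _ (cls_mem_blocks P a),
    inB_merge_of_mem h (cls P a) (cls_mono hP a)]
  have e : ∏ B ∈ (blocks P).erase (cls P a), (#B : ℚ) ^ ((#(inB Q2 B) : ℤ) - 3) =
      ∏ B ∈ (blocks P).erase (cls P a), (#B : ℚ) ^ ((#(inB Q B) : ℤ) - 3) := by
    refine Finset.prod_congr rfl fun B hB => ?_
    rw [Finset.mem_erase] at hB
    rw [inB_merge_of_notMem h]
    · intro ha; exact hB.1 (eq_cls_of_mem hB.2 ha)
    · intro ha; apply hB.1; rw [eq_cls_of_mem hB.2 ha]; exact cls_eq_iff.mpr (P.symm hPab)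
  rw [e]
  have e2 : (((#(inB Q2 (cls P a)) + 1 : ℕ) : ℤ) - 3) = ((#(inB Q2 (cls P a)) : ℤ) - 3) + 1 := by
    push_cast; ring
  rw [e2, zpow_add_one₀ hn]
  field_simp

end

end Hurw

namespace Hurw

open Finset

noncomputable instance setoidFintype {α : Type*} [Fintype α] : Fintype (Setoid α) := by
  classical
  exact Fintype.ofInjective (fun (P : Setoid α) (x y : α) => P x y) (by
    intro P Q h
    ext x y
    exact iff_of_eq (congrFun (congrFun h x) y))

/-- Splitting a setoid by a set. -/
def splitS {α : Type*} (P : Setoid α) (A : Finset α) : Setoid α where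
  r x y := P x y ∧ (x ∈ A ↔ y ∈ A)
  iseqv := ⟨fun x => ⟨P.refl x, Iff.rfl⟩, fun h => ⟨P.symm h.1, h.2.symm⟩,
    fun h h' => ⟨P.trans h.1 h'.1, h.2.trans h'.2⟩⟩

theorem splitS_rel {α : Type*} (P : Setoid α) (A : Finset α) (x y : α) :
    splitS P A x y ↔ P x y ∧ (x ∈ A ↔ y ∈ A) := Iff.rfl

section
variable {α : Type*} [Fintype α] [DecidableEq α]

/-- The other cycles in the block of `a`. -/
noncomputable def JJ (Q P : Setoid α) (a : α) : Finset (Finset α) :=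
  (inB Q (cls P a)).erase (cls Q a)

/-- The other cycles contained in the `P'`-block of `a`. -/
noncomputable def JF (Q P P' : Setoid α) (a : α) : Finset (Finset α) :=
  (JJ Q P a).filter (fun D => D ⊆ cls P' a)

theorem mem_JJ {Q P : Setoid α} {a : α} {D : Finset α} :
    D ∈ JJ Q P a ↔ D ≠ cls Q a ∧ D ∈ blocks Q ∧ D ⊆ cls P a := by
  simp [JJ, mem_inB]

theorem mem_JF {Q P P' : Setoid α} {a : α} {D : Finset α} :
    D ∈ JF Q P P' a ↔ (D ≠ cls Q a ∧ D ∈ blocks Q ∧ D ⊆ cls P a) ∧ D ⊆ cls P' a := by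
  simp [JF, mem_JJ]

section
variable {Q' Q P' P : Setoid α} {a b : α}

theorem inB_cut (h : Merges Q' Q a b) (hP' : Merges P' P a b) (hle : Q' ≤ P') :
    inB Q' (cls P' a) = insert (cls Q' a) (JF Q P P' a) := by
  ext D
  rw [mem_inB, h.blocks_eq]
  simp only [Finset.mem_insert, Finset.mem_erase, mem_JF]
  constructor
  · rintro ⟨(h1 | rfl | h1), h2⟩
    · exact Or.inl h1
    · exact absurd (mem_cls.mp (h2 (self_mem_cls Q' b))) hP'.sep
    · exact Or.inr ⟨⟨h1.1, h1.2, h2.trans (cls_mono hP'.le a)⟩, h2⟩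
  · rintro (rfl | h1)
    · exact ⟨Or.inl rfl, cls_mono hle a⟩
    · exact ⟨Or.inr (Or.inr ⟨h1.1.1, h1.1.2.1⟩), h1.2⟩

theorem notMem_JF (h : Merges Q' Q a b) : cls Q' a ∉ JF Q P P' a := by
  intro h'
  rw [mem_JF] at h'
  apply h.notMem_a
  exact Finset.mem_insert_of_mem (Finset.mem_erase.mpr ⟨h'.1.1, h'.1.2.1⟩)

theorem card_inB_cut (h : Merges Q' Q a b) (hP' : Merges P' P a b) (hle : Q' ≤ P') :
    #(inB Q' (cls P' a)) = #(JF Q P P' a) + 1 := by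
  rw [inB_cut h hP' hle, Finset.card_insert_of_notMem (notMem_JF h)]

theorem saturated (hle : Q ≤ P) (a : α) : ∀ x ∈ cls P a, cls Q x ⊆ cls P a := by
  intro x hx y hy
  rw [mem_cls] at *
  exact P.trans hx (hle hy)

theorem card_cls_cut (h : Merges Q' Q a b) (hP' : Merges P' P a b) (hle : Q' ≤ P') :
    #(cls P' a) = #(cls Q' a) + ∑ D ∈ JF Q P P' a, #D := by
  have := sum_inB Q' (cls P' a) (saturated hle a) (fun _ => 1)
  simp only [Finset.sum_const, smul_eq_mul, mul_one] at this
  rw [this, inB_cut h hP' hle, Finset.sum_insert (notMem_JF h)]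

theorem cls_cut (h : Merges Q' Q a b) (hP' : Merges P' P a b) (hle : Q' ≤ P') :
    cls P' a = cls Q' a ∪ (JF Q P P' a).biUnion id := by
  ext x
  constructor
  · intro hx
    have : cls Q' x ∈ inB Q' (cls P' a) :=
      mem_inB.mpr ⟨cls_mem_blocks _ _, saturated hle a x hx⟩
    rw [inB_cut h hP' hle, Finset.mem_insert] at this
    rw [Finset.mem_union, Finset.mem_biUnion]
    rcases this with h1 | h1
    · left; rw [← h1]; exact self_mem_cls _ _
    · right; exact ⟨_, h1, self_mem_cls _ _⟩
  · rw [Finset.mem_union, Finset.mem_biUnion]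
    rintro (h1 | ⟨D, h1, h2⟩)
    · exact cls_mono hle a h1
    · exact (mem_JF.mp h1).2 h2

theorem JJ_comm (hQ : Q a b) (hP : P a b) : JJ Q P a = JJ Q P b := by
  unfold JJ
  rw [cls_eq_iff.mpr hQ, cls_eq_iff.mpr hP]

theorem JF_compl (h : Merges Q' Q a b) (hP' : Merges P' P a b) (hle : Q' ≤ P') :
    JF Q P P' b = JJ Q P a \ JF Q P P' a := by
  ext D
  rw [Finset.mem_sdiff, JF, JF, JJ_comm h.rel_ab hP'.rel_ab, Finset.mem_filter, Finset.mem_filter]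
  constructor
  · rintro ⟨h1, h2⟩
    refine ⟨h1, fun h3 => ?_⟩
    obtain ⟨x, hx⟩ := Finset.card_pos.mp (card_pos_of_mem_blocks (mem_JJ.mp h1).2.1)
    exact Finset.disjoint_left.mp hP'.disj (h3.2 hx) (h2 hx)
  · rintro ⟨h1, h2⟩
    refine ⟨h1, ?_⟩
    rw [← JJ_comm h.rel_ab hP'.rel_ab] at h1
    obtain ⟨h3, h4, h5⟩ := mem_JJ.mp h1
    obtain ⟨x, rfl⟩ := mem_blocks.mp h4
    have hx : x ∈ cls P a := h5 (self_mem_cls Q x)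
    have hnx : ¬ Q a x := fun h' => h3 (cls_eq_iff.mpr (Q.symm h'))
    rw [hP'.cls_union, Finset.mem_union] at hx
    rw [h.cls_other hnx] at h1 h2 ⊢
    rcases hx with hx | hx
    · refine absurd ⟨?_, ?_⟩ h2
      · rw [← JJ_comm h.rel_ab hP'.rel_ab]; exact h1
      · exact saturated hle a x hx
    · exact saturated hle b x hx

theorem splitS_cls (hP' : Merges P' P a b) : splitS P (cls P' a) = P' := by
  ext x y
  rw [splitS_rel, mem_cls, mem_cls]
  constructor
  · rintro ⟨h1, h2⟩
    rcases (hP'.rel x y).mp h1 with h3 | ⟨h3, h4⟩ | ⟨h3, h4⟩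
    · exact h3
    · exact absurd (P'.trans (h2.mp (P'.symm h3)) (P'.symm h4)) hP'.sep
    · exact absurd (P'.trans (h2.mpr h4) h3) hP'.sep
  · intro h
    exact ⟨hP'.le h, fun h' => P'.trans h' h, fun h' => P'.trans h' (P'.symm h)⟩

theorem splitS_merges {A : Finset α} (hPab : P a b) (ha : a ∈ A) (hb : b ∉ A)
    (hA : A ⊆ cls P a) : Merges (splitS P A) P a b := by
  refine ⟨?_, fun h => hb (h.2.mp ha)⟩
  ext x y
  refine Iff.trans ?_ (sup_link_rel _ a b x y).symm
  simp only [splitS_rel]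
  constructor
  · intro hxy
    by_cases hx : x ∈ A <;> by_cases hy : y ∈ A
    · simp [hxy, hx, hy]
    · have hax : P a x := mem_cls.mp (hA hx)
      right; left
      exact ⟨⟨P.symm hax, by simp [hx, ha]⟩, P.trans (P.symm hPab) (P.trans hax hxy), by simp [hb, hy]⟩
    · have hay : P a y := mem_cls.mp (hA hy)
      right; right
      exact ⟨⟨P.trans (P.trans hxy (P.symm hay)) hPab, by simp [hx, hb]⟩, hay, by simp [ha, hy]⟩
    · simp [hxy, hx, hy]
  · rintro (h | ⟨h, h'⟩ | ⟨h, h'⟩)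
    · exact h.1
    · exact P.trans h.1 (P.trans hPab h'.1)
    · exact P.trans h.1 (P.trans (P.symm hPab) h'.1)

theorem cls_splitS {A : Finset α} (ha : a ∈ A) (hA : A ⊆ cls P a) :
    cls (splitS P A) a = A := by
  ext x
  rw [mem_cls, splitS_rel]
  constructor
  · intro h; exact h.2.mp ha
  · intro h; exact ⟨mem_cls.mp (hA h), by simp [h, ha]⟩

/-- The block of `a` determined by a set of cycles. -/
noncomputable def blk (Q' : Setoid α) (a : α) (S : Finset (Finset α)) : Finset α :=
  cls Q' a ∪ S.biUnion id

theorem a_mem_blk (S : Finset (Finset α)) : a ∈ blk Q' a S :=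
  Finset.mem_union_left _ (self_mem_cls _ _)

theorem blk_subset (h : Merges Q' Q a b) (hQP : Q ≤ P) {S : Finset (Finset α)}
    (hS : S ⊆ JJ Q P a) : blk Q' a S ⊆ cls P a := by
  intro x hx
  rw [blk, Finset.mem_union, Finset.mem_biUnion] at hx
  rcases hx with hx | ⟨D, hD, hx⟩
  · exact cls_mono (h.le.trans hQP) a hx
  · exact (mem_JJ.mp (hS hD)).2.2 hx

theorem b_notMem_blk (h : Merges Q' Q a b) {S : Finset (Finset α)}
    (hS : S ⊆ JJ Q P a) : b ∉ blk Q' a S := by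
  intro hx
  rw [blk, Finset.mem_union, Finset.mem_biUnion] at hx
  rcases hx with hx | ⟨D, hD, hx⟩
  · exact h.sep (mem_cls.mp hx)
  · have := mem_JJ.mp (hS hD)
    apply this.1
    rw [eq_cls_of_mem this.2.1 hx]
    exact cls_eq_iff.mpr (Q.symm h.rel_ab)

theorem le_splitS (h : Merges Q' Q a b) (hQP : Q ≤ P) {S : Finset (Finset α)}
    (hS : S ⊆ JJ Q P a) : Q' ≤ splitS P (blk Q' a S) := by
  have key : ∀ x y, Q' x y → x ∈ blk Q' a S → y ∈ blk Q' a S := by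
    intro x y hxy hx
    rw [blk, Finset.mem_union, Finset.mem_biUnion] at hx ⊢
    rcases hx with hx | ⟨D, hD, hx⟩
    · left; rw [mem_cls] at *; exact Q'.trans hx hxy
    · right
      refine ⟨D, hD, ?_⟩
      have := eq_cls_of_mem (mem_JJ.mp (hS hD)).2.1 hx
      simp only [id] at *
      rw [this, mem_cls]
      exact h.le hxy
  intro x y hxy
  exact ⟨hQP (h.le hxy), key x y hxy, key y x (Q'.symm hxy)⟩

theorem JF_splitS (h : Merges Q' Q a b) (hQP : Q ≤ P) {S : Finset (Finset α)}
    (hS : S ⊆ JJ Q P a) : JF Q P (splitS P (blk Q' a S)) a = S := by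
  ext D
  rw [JF, Finset.mem_filter, cls_splitS (a_mem_blk S) (blk_subset h hQP hS)]
  constructor
  · rintro ⟨h1, h2⟩
    obtain ⟨h3, h4, h5⟩ := mem_JJ.mp h1
    obtain ⟨x, hx⟩ := Finset.card_pos.mp (card_pos_of_mem_blocks h4)
    have hx' := h2 hx
    rw [blk, Finset.mem_union, Finset.mem_biUnion] at hx'
    rcases hx' with hx' | ⟨D', hD', hx'⟩
    · exfalso
      apply h3
      rw [eq_cls_of_mem h4 hx]
      exact cls_eq_iff.mpr (Q.symm (h.le (mem_cls.mp hx')))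
    · rw [eq_cls_of_mem h4 hx, ← eq_cls_of_mem (mem_JJ.mp (hS hD')).2.1 hx']
      exact hD'
  · intro hD
    refine ⟨hS hD, fun x hx => ?_⟩
    rw [blk, Finset.mem_union, Finset.mem_biUnion]
    exact Or.inr ⟨D, hD, hx⟩

theorem GG_cut_value (h : Merges Q' Q a b) (hP' : Merges P' P a b) (hle : Q' ≤ P') :
    GG Q' P' = GG Q P * ((#(cls P a) : ℚ) ^ ((#(inB Q (cls P a)) : ℤ) - 3))⁻¹ *
      (ww #(cls Q' a) * ww #(cls Q' b) / ww #(cls Q a) *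
      (((#(cls Q' a) : ℚ) + ∑ D ∈ JF Q P P' a, (#D : ℚ)) ^ ((#(JF Q P P' a) : ℤ) - 2) *
      ((#(cls Q' b) : ℚ) + ∑ D ∈ JJ Q P a \ JF Q P P' a, (#D : ℚ)) ^
        ((#(JJ Q P a \ JF Q P P' a) : ℤ) - 2))) := by
  have hw := ww_pos _ (card_pos_of_mem_blocks (cls_mem_blocks Q a))
  have hn : (#(cls P a) : ℚ) ≠ 0 := by
    exact_mod_cast (card_pos_of_mem_blocks (cls_mem_blocks P a)).ne'
  unfold GG
  rw [h.prod_blocks, hP'.prod_blocks, ← Finset.mul_prod_erase (blocks Q) _ (cls_mem_blocks Q a),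
    ← Finset.mul_prod_erase (blocks P) _ (cls_mem_blocks P a)]
  have e : ∏ B ∈ (blocks P).erase (cls P a), (#B : ℚ) ^ ((#(inB Q' B) : ℤ) - 3) =
      ∏ B ∈ (blocks P).erase (cls P a), (#B : ℚ) ^ ((#(inB Q B) : ℤ) - 3) := by
    refine Finset.prod_congr rfl fun B hB => ?_
    rw [Finset.mem_erase] at hB
    rw [inB_merge_of_notMem h]
    · intro ha; exact hB.1 (eq_cls_of_mem hB.2 ha)
    · intro ha; apply hB.1; rw [eq_cls_of_mem hB.2 ha]; exact cls_eq_iff.mpr (P.symm hP'.rel_ab)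
  rw [e, card_inB_cut h hP' hle, card_inB_cut h.symm hP'.symm hle, card_cls_cut h hP' hle,
    card_cls_cut h.symm hP'.symm hle, JF_compl h hP' hle]
  have z := zpow_ne_zero ((#(inB Q (cls P a)) : ℤ) - 3) hn
  have e1 : ∀ k : ℕ, (((k + 1 : ℕ) : ℤ) - 3) = (k : ℤ) - 2 := by intro k; push_cast; ring
  rw [e1, e1]
  push_cast
  field_simp

end

open Classical in
theorem GG_cut {Q' Q P : Setoid α} {a b : α} (h : Merges Q' Q a b) (hQP : Q ≤ P) :
    ∑ P' ∈ univ.filter (fun P' : Setoid α => Merges P' P a b ∧ Q' ≤ P'), GG Q' P' =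
      GG Q P * ((#(cls P a) : ℚ) ^ ((#(inB Q (cls P a)) : ℤ) - 3))⁻¹ *
      (ww #(cls Q' a) * ww #(cls Q' b) / ww #(cls Q a) *
      ∑ S ∈ (JJ Q P a).powerset,
      ((#(cls Q' a) : ℚ) + ∑ D ∈ S, (#D : ℚ)) ^ ((#S : ℤ) - 2) *
      ((#(cls Q' b) : ℚ) + ∑ D ∈ JJ Q P a \ S, (#D : ℚ)) ^ ((#(JJ Q P a \ S) : ℤ) - 2)) := by
  rw [Finset.mul_sum, Finset.mul_sum]
  refine Finset.sum_bij' (fun P' _ => JF Q P P' a) (fun S _ => splitS P (blk Q' a S)) ?_ ?_ ?_ ?_ ?_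
  · intro P' _
    exact Finset.mem_powerset.mpr (Finset.filter_subset _ _)
  · intro S hS
    have hS' := Finset.mem_powerset.mp hS
    rw [Finset.mem_filter]
    exact ⟨Finset.mem_univ _, splitS_merges (hQP h.rel_ab) (a_mem_blk S) (b_notMem_blk h hS')
      (blk_subset h hQP hS'), le_splitS h hQP hS'⟩
  · intro P' hP'
    rw [Finset.mem_filter] at hP'
    have := cls_cut h hP'.2.1 hP'.2.2
    rw [blk, ← this, splitS_cls hP'.2.1]
  · intro S hS
    exact JF_splitS h hQP (Finset.mem_powerset.mp hS)
  · intro P' hP'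
    rw [Finset.mem_filter] at hP'
    exact GG_cut_value h hP'.2.1 hP'.2.2

end

end Hurw

namespace Hurw

open Finset

section
variable {α : Type*} [Fintype α] [DecidableEq α]

/-- The cycle partition of a permutation. -/
def ZZ {α : Type*} (σ : Equiv.Perm α) : Setoid α := Equiv.Perm.SameCycle.setoid σ

theorem ZZ_rel {σ : Equiv.Perm α} {x y : α} : ZZ σ x y ↔ σ.SameCycle x y := Iff.rfl

theorem ZZ_apply (σ : Equiv.Perm α) (x : α) : ZZ σ x (σ x) := by
  rw [ZZ_rel]
  exact ⟨1, by simp⟩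

theorem ZZ_pow (σ : Equiv.Perm α) (x : α) (n : ℕ) : ZZ σ x ((σ ^ n) x) := by
  rw [ZZ_rel]
  exact ⟨n, by simp⟩

theorem ZZ_le {σ : Equiv.Perm α} {R : Setoid α} (h : ∀ x, R x (σ x)) : ZZ σ ≤ R := by
  intro x y hxy
  obtain ⟨n, hn⟩ := Equiv.Perm.SameCycle.exists_nat_pow_eq (ZZ_rel.mp hxy)
  have : ∀ m : ℕ, R x ((σ ^ m) x) := by
    intro m
    induction m with
    | zero => exact R.refl x
    | succ m ih =>
      rw [pow_succ']
      exact R.trans ih (h _)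
  rw [← hn]; exact this n

theorem ZZ_one : ZZ (1 : Equiv.Perm α) = ⊥ := by
  ext x y
  exact Equiv.Perm.sameCycle_one

theorem link_swap (a b x : α) : link a b x (Equiv.swap a b x) := by
  by_cases h1 : x = a
  · subst h1; rw [Equiv.swap_apply_left]; exact Or.inr (Or.inl ⟨rfl, rfl⟩)
  by_cases h2 : x = b
  · subst h2; rw [Equiv.swap_apply_right]; exact Or.inr (Or.inr ⟨rfl, rfl⟩)
  rw [Equiv.swap_apply_of_ne_of_ne h1 h2]

theorem ZZ_swap (a b : α) : ZZ (Equiv.swap a b) = link a b := by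
  apply le_antisymm
  · exact ZZ_le (link_swap a b)
  · rw [link_le_iff]
    have := ZZ_apply (Equiv.swap a b) a
    rwa [Equiv.swap_apply_left] at this

theorem ZZ_mul_swap_le (σ : Equiv.Perm α) (a b : α) :
    ZZ (σ * Equiv.swap a b) ≤ ZZ σ ⊔ link a b := by
  apply ZZ_le
  intro x
  have h1 : link a b ≤ ZZ σ ⊔ link a b := le_sup_right
  have h2 : ZZ σ ≤ ZZ σ ⊔ link a b := le_sup_left
  exact Setoid.trans' _ (h1 (link_swap a b x)) (h2 (ZZ_apply σ _))

theorem ZZ_le_mul_swap (σ : Equiv.Perm α) (a b : α) :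
    ZZ σ ≤ ZZ (σ * Equiv.swap a b) ⊔ link a b := by
  have := ZZ_mul_swap_le (σ * Equiv.swap a b) a b
  rwa [mul_assoc, Equiv.swap_mul_self, mul_one] at this

theorem cls_of_orbit (σ : Equiv.Perm α) (p : ℕ) (hp : 0 < p) (x : ℕ → α)
    (h : ∀ j, j + 1 < p → σ (x j) = x (j + 1)) (hl : σ (x (p - 1)) = x 0) :
    cls (ZZ σ) (x 0) = (range p).image x := by
  apply Finset.Subset.antisymm
  · intro y hy
    obtain ⟨n, rfl⟩ := Equiv.Perm.SameCycle.exists_nat_pow_eq (ZZ_rel.mp (mem_cls.mp hy))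
    clear hy
    induction n with
    | zero => exact mem_image.mpr ⟨0, mem_range.mpr hp, rfl⟩
    | succ n ih =>
      obtain ⟨j, hj, hj'⟩ := mem_image.mp ih
      rw [pow_succ', Equiv.Perm.mul_apply, ← hj']
      rw [mem_range] at hj
      by_cases hjp : j + 1 < p
      · rw [h j hjp]; exact mem_image_of_mem _ (mem_range.mpr hjp)
      · have : j = p - 1 := by omega
        rw [this, hl]; exact mem_image_of_mem _ (mem_range.mpr hp)
  · intro y hy
    obtain ⟨j, hj, rfl⟩ := mem_image.mp hy
    rw [mem_cls]
    rw [mem_range] at hj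
    clear hy
    induction j with
    | zero => exact Setoid.refl' _ _
    | succ j ih =>
      have := ih (by omega)
      refine Setoid.trans' _ this ?_
      rw [← h j hj]; exact ZZ_apply σ _

/-- The period of a point. -/
noncomputable def per (σ : Equiv.Perm α) (a : α) : ℕ := Function.minimalPeriod σ a

theorem per_pos (σ : Equiv.Perm α) (a : α) : 0 < per σ a := by
  apply Function.IsPeriodicPt.minimalPeriod_pos (orderOf_pos σ)
  show (σ^[orderOf σ]) a = a
  rw [← Equiv.Perm.coe_pow, pow_orderOf_eq_one]; rfl

theorem pow_per (σ : Equiv.Perm α) (a : α) : (σ ^ per σ a) a = a := by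
  rw [Equiv.Perm.coe_pow]; exact Function.iterate_minimalPeriod

theorem pow_inj (σ : Equiv.Perm α) (a : α) {i j : ℕ} (hi : i < per σ a) (hj : j < per σ a)
    (h : (σ ^ i) a = (σ ^ j) a) : i = j := by
  rw [Equiv.Perm.coe_pow, Equiv.Perm.coe_pow] at h
  exact (Function.iterate_eq_iterate_iff_of_lt_minimalPeriod hi hj).mp h

theorem pow_inj' (σ : Equiv.Perm α) (a : α) {i j : ℕ} (hi : i ≤ per σ a) (hj : j ≤ per σ a)
    (hi0 : 0 < i) (hj0 : 0 < j)
    (h : (σ ^ i) a = (σ ^ j) a) : i = j := by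
  obtain ⟨i, rfl⟩ := Nat.exists_eq_succ_of_ne_zero hi0.ne'
  obtain ⟨j, rfl⟩ := Nat.exists_eq_succ_of_ne_zero hj0.ne'
  rw [Nat.succ_eq_add_one, Nat.succ_eq_add_one, pow_succ', pow_succ'] at h
  have := pow_inj σ a (by omega) (by omega) (σ.injective h)
  rw [this]

theorem cls_ZZ (σ : Equiv.Perm α) (a : α) :
    cls (ZZ σ) a = (range (per σ a)).image (fun j => (σ ^ j) a) := by
  have := cls_of_orbit σ (per σ a) (per_pos σ a) (fun j => (σ ^ j) a)
    (fun j _ => by rw [pow_succ']; rfl)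
    (by
      have h := pow_per σ a
      have h0 := per_pos σ a
      show (σ ^ (1:ℕ) * σ ^ (per σ a - 1)) a = (σ ^ 0) a
      rw [← pow_add, Nat.add_sub_cancel' h0, h]; rfl)
  simpa using this

theorem card_cls_ZZ (σ : Equiv.Perm α) (a : α) : #(cls (ZZ σ) a) = per σ a := by
  rw [cls_ZZ, card_image_of_injOn, card_range]
  intro i hi j hj h
  exact pow_inj σ a (by simpa using hi) (by simpa using hj) h

theorem merges_join {σ : Equiv.Perm α} {a b : α} (h : ¬ ZZ σ a b) :
    Merges (ZZ σ) (ZZ (σ * Equiv.swap a b)) a b := by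
  refine ⟨?_, h⟩
  apply le_antisymm (ZZ_mul_swap_le σ a b)
  have key : ∀ j, j + 1 ≤ per σ a →
      ((σ * Equiv.swap a b) ^ (j + 1)) b = (σ ^ (j + 1)) a := by
    intro j
    induction j with
    | zero => intro _; simp
    | succ j ih =>
      intro hj
      rw [pow_succ', Equiv.Perm.mul_apply, ih (by omega), pow_succ' σ (j+1),
        Equiv.Perm.mul_apply, Equiv.Perm.mul_apply, Equiv.swap_apply_of_ne_of_ne]
      · intro h'
        have := pow_inj σ a (i := j + 1) (j := 0) (by omega) (per_pos σ a) (by simpa using h')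
        omega
      · intro h'
        apply h
        have := ZZ_pow σ a (j+1)
        rwa [h'] at this
  have h1 : ZZ (σ * Equiv.swap a b) a b := by
    have h0 := per_pos σ a
    have := key (per σ a - 1) (by omega)
    rw [Nat.sub_add_cancel h0, pow_per] at this
    have h2 := ZZ_pow (σ * Equiv.swap a b) b (per σ a)
    rw [this] at h2
    exact Setoid.symm' _ h2
  have h2 := ZZ_le_mul_swap σ a b
  rw [sup_eq_left.mpr ((link_le_iff _ a b).mpr h1)] at h2
  exact sup_le h2 ((link_le_iff _ a b).mpr h1)

theorem cut_data (σ : Equiv.Perm α) (a : α) (s : ℕ) (hs : 0 < s) (hsp : s < per σ a) :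
    Merges (ZZ (σ * Equiv.swap a ((σ ^ s) a))) (ZZ σ) a ((σ ^ s) a) ∧
    #(cls (ZZ (σ * Equiv.swap a ((σ ^ s) a))) a) = per σ a - s ∧
    #(cls (ZZ (σ * Equiv.swap a ((σ ^ s) a))) ((σ ^ s) a)) = s := by
  set b := (σ ^ s) a with hb
  set τ := σ * Equiv.swap a b with hτ
  set p := per σ a with hp
  have hap : a = (σ ^ p) a := (pow_per σ a).symm
  have step : ∀ j, 0 < j → j < p → j ≠ s → τ ((σ ^ j) a) = (σ ^ (j + 1)) a := by
    intro j hj hjp hjs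
    rw [hτ, Equiv.Perm.mul_apply, Equiv.swap_apply_of_ne_of_ne, pow_succ', Equiv.Perm.mul_apply]
    · intro h
      have := pow_inj σ a (i := j) (j := 0) hjp (by omega) (by simpa using h)
      omega
    · intro h
      exact hjs (pow_inj σ a hjp hsp h)
  have ha : τ a = (σ ^ (s + 1)) a := by
    rw [hτ, Equiv.Perm.mul_apply, Equiv.swap_apply_left, hb, pow_succ', Equiv.Perm.mul_apply]
  have hbb : τ b = (σ ^ (0 + 1)) a := by
    rw [hτ, Equiv.Perm.mul_apply, Equiv.swap_apply_right, zero_add, pow_one]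
  have c1 := cls_of_orbit τ (p - s) (by omega) (fun j => (σ ^ (s + 1 + j)) a)
    (fun j hj => by
      have := step (s + 1 + j) (by omega) (by omega) (by omega)
      exact this)
    (by
      show τ ((σ ^ (s + 1 + (p - s - 1))) a) = _
      rw [show s + 1 + (p - s - 1) = p by omega, ← hap, ha])
  have c2 := cls_of_orbit τ s hs (fun j => (σ ^ (j + 1)) a)
    (fun j hj => by
      have := step (j + 1) (by omega) (by omega) (by omega)
      exact this)
    (by
      show τ ((σ ^ (s - 1 + 1)) a) = _
      rw [show s - 1 + 1 = s by omega, ← hb, hbb])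
  have ha1 : a ∈ cls (ZZ τ) ((σ ^ (s + 1 + 0)) a) := by
    rw [c1]
    exact mem_image.mpr ⟨p - s - 1, by simp; omega, by
      show (σ ^ (s + 1 + (p - s - 1))) a = a
      rw [show s + 1 + (p - s - 1) = p by omega, ← hap]⟩
  have hb1 : b ∈ cls (ZZ τ) ((σ ^ (0 + 1)) a) := by
    rw [c2]
    exact mem_image.mpr ⟨s - 1, by simp; omega, by
      show (σ ^ (s - 1 + 1)) a = b
      rw [show s - 1 + 1 = s by omega]⟩
  have e1 := cls_eq_iff.mpr (mem_cls.mp ha1)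
  have e2 := cls_eq_iff.mpr (mem_cls.mp hb1)
  refine ⟨⟨?_, ?_⟩, ?_, ?_⟩
  · apply le_antisymm (ZZ_le_mul_swap σ a b)
    have h1 : ZZ σ a b := ZZ_pow σ a s
    have h2 := ZZ_mul_swap_le σ a b
    rw [sup_eq_left.mpr ((link_le_iff _ a b).mpr h1)] at h2
    exact sup_le h2 ((link_le_iff _ a b).mpr h1)
  · intro h
    have h3 : b ∈ cls (ZZ τ) a := mem_cls.mpr h
    rw [← e1, c1] at h3
    obtain ⟨j, hj, hj'⟩ := mem_image.mp h3
    have hj2 := mem_range.mp hj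
    have := pow_inj' σ a (i := s + 1 + j) (j := s) (by omega) (by omega) (by omega) hs hj'
    omega
  · rw [← e1, c1, card_image_of_injOn, card_range]
    intro i hi j hj h
    simp only [coe_range, Set.mem_Iio] at hi hj
    have := pow_inj' σ a (i := s + 1 + i) (j := s + 1 + j) (by omega) (by omega) (by omega)
      (by omega) h
    omega
  · rw [← e2, c2, card_image_of_injOn, card_range]
    intro i hi j hj h
    simp only [coe_range, Set.mem_Iio] at hi hj
    have := pow_inj' σ a (i := i + 1) (j := j + 1) (by omega) (by omega) (by omega)
      (by omega) h
    omega

theorem exists_pow_of_ZZ {σ : Equiv.Perm α} {a b : α} (h : ZZ σ a b) (hab : a ≠ b) :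
    ∃ s, 0 < s ∧ s < per σ a ∧ (σ ^ s) a = b := by
  have h1 := mem_cls.mpr h
  rw [cls_ZZ] at h1
  obtain ⟨s, hs, rfl⟩ := mem_image.mp h1
  refine ⟨s, Nat.pos_of_ne_zero ?_, mem_range.mp hs, rfl⟩
  rintro rfl
  exact hab rfl

theorem merges_cut {σ : Equiv.Perm α} {a b : α} (h : ZZ σ a b) (hab : a ≠ b) :
    Merges (ZZ (σ * Equiv.swap a b)) (ZZ σ) a b := by
  obtain ⟨s, hs, hsp, rfl⟩ := exists_pow_of_ZZ h hab
  exact (cut_data σ a s hs hsp).1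

theorem sum_cut (σ : Equiv.Perm α) (a : α) (F : ℕ → ℕ → ℚ) :
    ∑ b ∈ (cls (ZZ σ) a).erase a, F #(cls (ZZ (σ * Equiv.swap a b)) a)
      #(cls (ZZ (σ * Equiv.swap a b)) b) =
    ∑ s ∈ Ico 1 #(cls (ZZ σ) a), F s (#(cls (ZZ σ) a) - s) := by
  rw [card_cls_ZZ]
  symm
  refine Finset.sum_bij (fun s _ => (σ ^ (per σ a - s)) a) ?_ ?_ ?_ ?_
  · intro s hs
    rw [mem_Ico] at hs
    rw [mem_erase]
    refine ⟨fun h => ?_, mem_cls.mpr (ZZ_pow σ a _)⟩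
    have := pow_inj σ a (i := per σ a - s) (j := 0) (by omega) (by omega) (by simpa using h)
    omega
  · intro s hs t ht h
    rw [mem_Ico] at hs ht
    have := pow_inj σ a (by omega) (by omega) h
    omega
  · intro b hb
    rw [mem_erase, mem_cls] at hb
    obtain ⟨s, hs, hsp, rfl⟩ := exists_pow_of_ZZ hb.2 (Ne.symm hb.1)
    exact ⟨per σ a - s, by rw [mem_Ico]; omega, by
      rw [show per σ a - (per σ a - s) = s by omega]⟩
  · intro s hs
    rw [mem_Ico] at hs
    obtain ⟨_, h1, h2⟩ := cut_data σ a (per σ a - s) (by omega) (by omega)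
    rw [h1, h2]
    congr 1
    omega

end
end Hurw

namespace Hurw

open Finset

section
variable {α : Type*} [Fintype α] [DecidableEq α]

theorem sum_one_div (Q : Setoid α) (B : Finset α) (hB : ∀ x ∈ B, cls Q x ⊆ B) :
    ∑ a ∈ B, (1:ℚ) / #(cls Q a) = #(inB Q B) := by
  rw [sum_inB Q B hB]
  have : ∀ C ∈ inB Q B, ∑ a ∈ C, (1:ℚ) / #(cls Q a) = 1 := by
    intro C hC
    have h1 := (mem_inB.mp hC).1
    have h2 : (0:ℚ) < #C := by exact_mod_cast card_pos_of_mem_blocks h1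
    rw [Finset.sum_congr rfl (fun a ha => by rw [← eq_cls_of_mem h1 ha])]
    rw [Finset.sum_const, nsmul_eq_mul]
    field_simp
  rw [Finset.sum_congr rfl this]
  simp

theorem inB_univ (Q : Setoid α) : inB Q univ = blocks Q := by
  ext C; simp [mem_inB]

theorem saturated' {Q P : Setoid α} (hle : Q ≤ P) {B : Finset α} (hB : B ∈ blocks P) :
    ∀ x ∈ B, cls Q x ⊆ B := by
  obtain ⟨y, rfl⟩ := mem_blocks.mp hB
  exact saturated hle y

theorem sum_card_inB {Q P : Setoid α} (hle : Q ≤ P) :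
    ∑ B ∈ blocks P, (#(inB Q B) : ℚ) = #(blocks Q) := by
  rw [← inB_univ Q, ← sum_one_div Q univ (fun _ _ => subset_univ _), sum_blocks P]
  exact Finset.sum_congr rfl fun B hB => (sum_one_div Q B (saturated' hle hB)).symm

theorem sum_card_blocks (P : Setoid α) :
    ∑ B ∈ blocks P, (#B : ℚ) = Fintype.card α := by
  have := sum_blocks P (fun _ => (1:ℚ))
  simp at this
  rw [this]

theorem sum_card_in {Q : Setoid α} {B : Finset α} (hB : ∀ x ∈ B, cls Q x ⊆ B) :
    ∑ C ∈ inB Q B, (#C : ℚ) = #B := by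
  have := sum_inB Q B hB (fun _ => (1:ℚ))
  simp at this
  rw [this]

theorem inB_sdiff {Q : Setoid α} {B : Finset α} (hB : ∀ x ∈ B, cls Q x ⊆ B) {a : α} (ha : a ∈ B) :
    inB Q (B \ cls Q a) = (inB Q B).erase (cls Q a) := by
  ext D
  rw [mem_inB, mem_erase, mem_inB]
  constructor
  · rintro ⟨h1, h2⟩
    refine ⟨?_, h1, h2.trans sdiff_subset⟩
    rintro rfl
    exact (mem_sdiff.mp (h2 (self_mem_cls Q a))).2 (self_mem_cls Q a)
  · rintro ⟨h0, h1, h2⟩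
    refine ⟨h1, fun x hx => mem_sdiff.mpr ⟨h2 hx, fun hx' => h0 ?_⟩⟩
    rw [eq_cls_of_mem h1 hx, cls_eq_iff]
    exact Setoid.symm' _ (mem_cls.mp hx')

/-- The bracket of the block identity. -/
noncomputable def XX (I : Finset (Finset α)) (n : ℚ) (C : Finset α) : ℚ :=
  ∑ D ∈ I.erase C, (#D:ℚ) * (n ^ ((#I:ℤ)-4) * (ww (#C + #D) / (ww #C * ww #D))) +
    ∑ s ∈ Ico 1 #C, ww s * ww (#C - s) / ww #C *
      ∑ S ∈ (I.erase C).powerset, ((s:ℚ) + ∑ D ∈ S, (#D:ℚ)) ^ ((#S:ℤ)-2) *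
        (((#C - s:ℕ):ℚ) + ∑ D ∈ I.erase C \ S, (#D:ℚ)) ^ ((#(I.erase C \ S):ℤ)-2)

theorem XX_sum (I : Finset (Finset α)) (hI : I.Nonempty) (h : ∀ C ∈ I, 0 < #C) (n : ℚ)
    (hn : n = ∑ C ∈ I, (#C:ℚ)) :
    ∑ C ∈ I, (#C:ℚ) * XX I n C = 2*(n + #I - 2) * n^((#I:ℤ)-3) :=
  block_identity I (fun C => #C) h hI n hn

/-- Contribution of the joins at `a`. -/
noncomputable def joinT (σ : Equiv.Perm α) (P : Setoid α) (a : α) : ℚ :=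
  ∑ b ∈ cls P a \ cls (ZZ σ) a, GG (ZZ (σ * Equiv.swap a b)) P

open Classical in
/-- Contribution of the cuts at `a`. -/
noncomputable def cutT (σ : Equiv.Perm α) (P : Setoid α) (a : α) : ℚ :=
  ∑ b ∈ (cls (ZZ σ) a).erase a,
    ∑ P' ∈ univ.filter (fun P' => Merges P' P a b ∧ ZZ (σ * Equiv.swap a b) ≤ P'),
      GG (ZZ (σ * Equiv.swap a b)) P'

theorem joinT_eq {σ : Equiv.Perm α} {P : Setoid α} (hle : ZZ σ ≤ P) (a : α) :
    joinT σ P a = GG (ZZ σ) P * ((#(cls P a):ℚ)^((#(inB (ZZ σ) (cls P a)):ℤ)-3))⁻¹ *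
      ∑ D ∈ (inB (ZZ σ) (cls P a)).erase (cls (ZZ σ) a),
        (#D:ℚ) * ((#(cls P a):ℚ) ^ ((#(inB (ZZ σ) (cls P a)):ℤ)-4) *
          (ww (#(cls (ZZ σ) a) + #D) / (ww #(cls (ZZ σ) a) * ww #D))) := by
  have hn : (0:ℚ) < #(cls P a) := by exact_mod_cast card_pos_of_mem_blocks (cls_mem_blocks P a)
  unfold joinT
  have h1 : ∀ b ∈ cls P a \ cls (ZZ σ) a, GG (ZZ (σ * Equiv.swap a b)) P =
      GG (ZZ σ) P * (ww (#(cls (ZZ σ) a) + #(cls (ZZ σ) b)) /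
        (ww #(cls (ZZ σ) a) * ww #(cls (ZZ σ) b)) * (#(cls P a):ℚ)⁻¹) := by
    intro b hb
    rw [mem_sdiff, mem_cls, mem_cls] at hb
    refine GG_join (merges_join hb.2) ?_
    refine (ZZ_mul_swap_le σ a b).trans (sup_le hle ((link_le_iff _ _ _).mpr hb.1))
  rw [Finset.sum_congr rfl h1]
  rw [sum_inB (ZZ σ), inB_sdiff (saturated hle a) (self_mem_cls P a), Finset.mul_sum]
  · refine Finset.sum_congr rfl fun D hD => ?_
    have hD1 := (mem_inB.mp (mem_erase.mp hD).2).1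
    rw [Finset.sum_congr rfl (fun b hb => by rw [← eq_cls_of_mem hD1 hb]), Finset.sum_const,
      nsmul_eq_mul]
    rw [show ((#(inB (ZZ σ) (cls P a)):ℤ)-4) = ((#(inB (ZZ σ) (cls P a)):ℤ)-3) - 1 by ring,
      zpow_sub_one₀ hn.ne']
    have := (zpow_pos hn ((#(inB (ZZ σ) (cls P a)):ℤ)-3)).ne'
    generalize (#(cls P a):ℚ)^((#(inB (ZZ σ) (cls P a)):ℤ)-3) = K at *
    field_simp
  · intro x hx
    rw [mem_sdiff] at hx
    intro y hy
    rw [mem_sdiff]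
    refine ⟨saturated hle a x hx.1 hy, fun h => hx.2 ?_⟩
    rw [mem_cls] at *
    exact Setoid.trans' _ h (Setoid.symm' _ hy)

theorem cutT_eq {σ : Equiv.Perm α} {P : Setoid α} (hle : ZZ σ ≤ P) (a : α) :
    cutT σ P a = GG (ZZ σ) P * ((#(cls P a):ℚ)^((#(inB (ZZ σ) (cls P a)):ℤ)-3))⁻¹ *
      ∑ s ∈ Ico 1 #(cls (ZZ σ) a), ww s * ww (#(cls (ZZ σ) a) - s) / ww #(cls (ZZ σ) a) *
      ∑ S ∈ ((inB (ZZ σ) (cls P a)).erase (cls (ZZ σ) a)).powerset,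
        ((s:ℚ) + ∑ D ∈ S, (#D:ℚ)) ^ ((#S:ℤ)-2) *
        (((#(cls (ZZ σ) a) - s:ℕ):ℚ) +
          ∑ D ∈ (inB (ZZ σ) (cls P a)).erase (cls (ZZ σ) a) \ S, (#D:ℚ)) ^
          ((#((inB (ZZ σ) (cls P a)).erase (cls (ZZ σ) a) \ S):ℤ)-2) := by
  unfold cutT
  rw [← sum_cut σ a (fun s t => ww s * ww t / ww #(cls (ZZ σ) a) *
      ∑ S ∈ ((inB (ZZ σ) (cls P a)).erase (cls (ZZ σ) a)).powerset,
        ((s:ℚ) + ∑ D ∈ S, (#D:ℚ)) ^ ((#S:ℤ)-2) *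
        ((t:ℚ) +
          ∑ D ∈ (inB (ZZ σ) (cls P a)).erase (cls (ZZ σ) a) \ S, (#D:ℚ)) ^
          ((#((inB (ZZ σ) (cls P a)).erase (cls (ZZ σ) a) \ S):ℤ)-2)), Finset.mul_sum]
  refine Finset.sum_congr rfl fun b hb => ?_
  rw [mem_erase, mem_cls] at hb
  have := GG_cut (merges_cut hb.2 (Ne.symm hb.1)) hle
  unfold JJ at this
  convert this using 2

theorem state_identity {σ : Equiv.Perm α} {P : Setoid α} (hle : ZZ σ ≤ P) :
    ∑ a, (joinT σ P a + cutT σ P a) =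
      2 * (Fintype.card α + #(blocks (ZZ σ)) - 2 * #(blocks P)) * GG (ZZ σ) P := by
  rw [sum_blocks P]
  have key : ∀ B ∈ blocks P, ∑ a ∈ B, (joinT σ P a + cutT σ P a) =
      2 * GG (ZZ σ) P * (#B + #(inB (ZZ σ) B) - 2) := by
    intro B hB
    have hs := saturated' hle hB
    have hn : (0:ℚ) < #B := by exact_mod_cast card_pos_of_mem_blocks hB
    have hK := (zpow_pos hn ((#(inB (ZZ σ) B):ℤ)-3)).ne'
    rw [sum_inB (ZZ σ) B hs]
    have h1 : ∀ C ∈ inB (ZZ σ) B, ∑ a ∈ C, (joinT σ P a + cutT σ P a) =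
        GG (ZZ σ) P * ((#B:ℚ)^((#(inB (ZZ σ) B):ℤ)-3))⁻¹ *
          ((#C:ℚ) * XX (inB (ZZ σ) B) #B C) := by
      intro C hC
      obtain ⟨hC1, hC2⟩ := mem_inB.mp hC
      have h2 : ∀ a ∈ C, joinT σ P a + cutT σ P a =
          GG (ZZ σ) P * ((#B:ℚ)^((#(inB (ZZ σ) B):ℤ)-3))⁻¹ * XX (inB (ZZ σ) B) #B C := by
        intro a ha
        rw [joinT_eq hle, cutT_eq hle, ← mul_add, ← eq_cls_of_mem hC1 ha,
          ← eq_cls_of_mem hB (hC2 ha)]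
        rfl
      rw [Finset.sum_congr rfl h2, Finset.sum_const, nsmul_eq_mul]
      ring
    rw [Finset.sum_congr rfl h1, ← Finset.mul_sum, XX_sum _ _ _ _ (sum_card_in hs).symm]
    · field_simp
    · obtain ⟨y, rfl⟩ := mem_blocks.mp hB
      exact ⟨cls (ZZ σ) y, mem_inB.mpr ⟨cls_mem_blocks _ _, cls_mono hle y⟩⟩
    · intro C hC
      exact card_pos_of_mem_blocks (mem_inB.mp hC).1
  rw [Finset.sum_congr rfl key, ← Finset.mul_sum, Finset.sum_sub_distrib, Finset.sum_add_distrib,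
    sum_card_inB hle, sum_card_blocks, Finset.sum_const, nsmul_eq_mul]
  ring

end
end Hurw

namespace Hurw

open Finset

section
variable {α : Type*} [Fintype α] [DecidableEq α]

open Classical in
/-- The weighted count, by recursion on the length. -/
noncomputable def NN : ℕ → Equiv.Perm α → Setoid α → ℚ
  | 0, σ, P => if σ = 1 ∧ P = ⊥ then 1 else 0
  | r + 1, σ, P => ∑ τ : Equiv.Perm α, if τ.IsSwap then
      ∑ P' : Setoid α, if P' ⊔ ZZ τ = P then NN r (σ * τ) P' else 0 else 0

theorem pair_fiber {x y : α} (hxy : x ≠ y) :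
    (univ.filter (fun q : α × α => q.1 ≠ q.2 ∧ Equiv.swap q.1 q.2 = Equiv.swap x y)) =
      {(x, y), (y, x)} := by
  ext ⟨a, b⟩
  simp only [mem_filter, mem_univ, true_and, mem_insert, mem_singleton, Prod.mk.injEq]
  constructor
  · rintro ⟨h1, h2⟩
    have h3 : Equiv.swap x y a = b := by rw [← h2, Equiv.swap_apply_left]
    by_cases hx : a = x
    · subst hx
      rw [Equiv.swap_apply_left] at h3
      exact Or.inl ⟨rfl, h3.symm⟩
    by_cases hy : a = y
    · subst hy
      rw [Equiv.swap_apply_right] at h3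
      exact Or.inr ⟨rfl, h3.symm⟩
    rw [Equiv.swap_apply_of_ne_of_ne hx hy] at h3
    exact absurd h3 h1
  · rintro (⟨rfl, rfl⟩ | ⟨rfl, rfl⟩)
    · exact ⟨hxy, rfl⟩
    · exact ⟨hxy.symm, Equiv.swap_comm _ _⟩

open Classical in
theorem sum_swaps (F : Equiv.Perm α → ℚ) :
    2 * ∑ τ : Equiv.Perm α, (if τ.IsSwap then F τ else 0) =
      ∑ a, ∑ b ∈ univ.erase a, F (Equiv.swap a b) := by
  have h1 : ∑ a, ∑ b ∈ univ.erase a, F (Equiv.swap a b) =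
      ∑ q ∈ univ.filter (fun q : α × α => q.1 ≠ q.2), F (Equiv.swap q.1 q.2) := by
    rw [Finset.sum_filter, Fintype.sum_prod_type]
    refine Finset.sum_congr rfl fun a _ => ?_
    rw [← Finset.sum_filter]
    refine Finset.sum_congr ?_ fun _ _ => rfl
    ext b; simp [eq_comm]
  rw [h1, ← Finset.sum_fiberwise (univ.filter (fun q : α × α => q.1 ≠ q.2))
    (fun q => Equiv.swap q.1 q.2), Finset.mul_sum]
  refine Finset.sum_congr rfl fun τ _ => ?_
  split_ifs with hτ
  · obtain ⟨x, y, hxy, rfl⟩ := hτ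
    rw [Finset.filter_filter, pair_fiber hxy, Finset.sum_pair, Equiv.swap_comm y x]
    · ring
    · intro h; exact hxy (Prod.mk.inj h).1
  · rw [Finset.sum_eq_zero, mul_zero]
    intro q hq
    simp only [mem_filter, mem_univ, true_and] at hq
    exact absurd ⟨q.1, q.2, hq.1, hq.2.symm⟩ hτ

theorem NN_ne_zero {r : ℕ} {σ : Equiv.Perm α} {P : Setoid α} (h : NN (r + 1) σ P ≠ 0) :
    ∃ a b P', a ≠ b ∧ P' ⊔ link a b = P ∧ NN r (σ * Equiv.swap a b) P' ≠ 0 := by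
  rw [NN] at h
  obtain ⟨τ, _, hτ⟩ := Finset.exists_ne_zero_of_sum_ne_zero h
  split_ifs at hτ with h1
  · obtain ⟨P', _, hP'⟩ := Finset.exists_ne_zero_of_sum_ne_zero hτ
    obtain ⟨a, b, hab, rfl⟩ := h1
    split_ifs at hP' with h2
    · exact ⟨a, b, P', hab, by rw [← h2, ZZ_swap], hP'⟩
    · exact absurd rfl hP'
  · exact absurd rfl hτ

theorem NN_le {r : ℕ} {σ : Equiv.Perm α} {P : Setoid α} (h : NN r σ P ≠ 0) : ZZ σ ≤ P := by
  induction r generalizing σ P with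
  | zero =>
    rw [NN] at h
    split_ifs at h with h1
    · rw [h1.1, h1.2, ZZ_one]
    · exact absurd rfl h
  | succ r ih =>
    obtain ⟨a, b, P', hab, rfl, h2⟩ := NN_ne_zero h
    exact (ZZ_le_mul_swap σ a b).trans (sup_le_sup_right (ih h2) _)

theorem blocks_bot_card {β : Type*} [Fintype β] :
    #(blocks (⊥ : Setoid β)) = Fintype.card β := by
  classical
  unfold blocks
  rw [card_image_of_injective]
  · rfl
  · intro x y h
    exact cls_eq_iff.mp h

theorem card_blocks_le {β : Type*} [Fintype β] (P : Setoid β) :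
    #(blocks P) ≤ Fintype.card β := by
  classical
  exact card_image_le

theorem eq_bot_of_card {β : Type*} [Fintype β] {P : Setoid β}
    (h : #(blocks P) = Fintype.card β) : P = ⊥ := by
  classical
  unfold blocks at h
  rw [← Finset.card_univ, Finset.card_image_iff] at h
  rw [eq_bot_iff]
  intro x y hxy
  exact h (mem_univ x) (mem_univ y) (cls_eq_iff.mpr hxy)

theorem card_blocks_anti {Q P : Setoid α} (h : Q ≤ P) : #(blocks P) ≤ #(blocks Q) := by
  have h1 := sum_card_inB h
  have h2 : ∑ B ∈ blocks P, (1:ℚ) ≤ ∑ B ∈ blocks P, (#(inB Q B) : ℚ) := by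
    refine Finset.sum_le_sum fun B hB => ?_
    obtain ⟨y, rfl⟩ := mem_blocks.mp hB
    have : 0 < #(inB Q (cls P y)) :=
      Finset.card_pos.mpr ⟨cls Q y, mem_inB.mpr ⟨cls_mem_blocks _ _, cls_mono h y⟩⟩
    exact_mod_cast this
  rw [h1] at h2
  simp at h2
  exact_mod_cast h2

theorem join_card {σ : Equiv.Perm α} {a b : α} (h : ¬ ZZ σ a b) :
    #(blocks (ZZ σ)) = #(blocks (ZZ (σ * Equiv.swap a b))) + 1 := (merges_join h).card_blocks

theorem cut_card {σ : Equiv.Perm α} {a b : α} (h : ZZ σ a b) (hab : a ≠ b) :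
    #(blocks (ZZ (σ * Equiv.swap a b))) = #(blocks (ZZ σ)) + 1 := (merges_cut h hab).card_blocks

theorem ZZ_swap_rel {σ : Equiv.Perm α} {a b : α} (hab : a ≠ b) :
    ZZ (σ * Equiv.swap a b) a b ↔ ¬ ZZ σ a b := by
  constructor
  · intro h h'
    exact (merges_cut h' hab).sep h
  · intro h
    exact (merges_join h).rel_ab

theorem NN_bound {r : ℕ} {σ : Equiv.Perm α} {P : Setoid α} (h : NN r σ P ≠ 0) :
    Fintype.card α + #(blocks (ZZ σ)) ≤ r + 2 * #(blocks P) := by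
  induction r generalizing σ P with
  | zero =>
    rw [NN] at h
    split_ifs at h with h1
    · rw [h1.1, h1.2, ZZ_one, blocks_bot_card]; omega
    · exact absurd rfl h
  | succ r ih =>
    obtain ⟨a, b, P', hab, hP, h2⟩ := NN_ne_zero h
    have h3 := ih h2
    have h4 := NN_le h2
    by_cases hP' : P' a b
    · rw [sup_eq_left.mpr ((link_le_iff _ a b).mpr hP')] at hP
      subst hP
      by_cases hz : ZZ σ a b
      · have := cut_card hz hab; omega
      · have := join_card hz; omega
    · have hm : Merges P' P a b := ⟨hP.symm, hP'⟩
      have h5 := hm.card_blocks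
      have hz : ZZ σ a b := by
        by_contra hz
        exact hP' (h4 ((ZZ_swap_rel hab).mpr hz))
      have := cut_card hz hab
      omega

theorem ww_one : ww 1 = 1 := by simp [ww, bb]

theorem card_of_mem_blocks_bot {C : Finset α} (h : C ∈ blocks (⊥ : Setoid α)) : #C = 1 := by
  obtain ⟨x, rfl⟩ := mem_blocks.mp h
  rw [Finset.card_eq_one]
  refine ⟨x, ?_⟩
  ext y
  rw [mem_cls, mem_singleton]
  exact ⟨fun h => h.symm, fun h => h.symm⟩

theorem prod_ww_bot : ∏ C ∈ blocks (⊥ : Setoid α), ww #C = 1 :=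
  Finset.prod_eq_one fun C hC => by rw [card_of_mem_blocks_bot hC, ww_one]

theorem GG_bot_bot : GG (⊥ : Setoid α) ⊥ = 1 := by
  unfold GG
  rw [prod_ww_bot, one_mul]
  refine Finset.prod_eq_one fun C hC => ?_
  rw [card_of_mem_blocks_bot hC]; simp

theorem blocks_top [Nonempty α] : blocks (⊤ : Setoid α) = {univ} := by
  have h : ∀ x, cls (⊤ : Setoid α) x = univ := by
    intro x; ext y; rw [mem_cls]; simp
  ext C
  rw [mem_blocks, mem_singleton]
  constructor
  · rintro ⟨x, rfl⟩; exact h x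
  · rintro rfl; exact ⟨Classical.arbitrary α, h _⟩

theorem GG_bot_top [Nonempty α] : GG (⊥ : Setoid α) ⊤ =
    (Fintype.card α : ℚ) ^ ((Fintype.card α : ℤ) - 3) := by
  unfold GG
  rw [prod_ww_bot, one_mul, blocks_top, Finset.prod_singleton, inB_univ, blocks_bot_card]
  rfl

theorem ZZ_eq_bot {σ : Equiv.Perm α} (h : ZZ σ = ⊥) : σ = 1 := by
  ext x
  have h1 := ZZ_apply σ x
  rw [h] at h1
  exact (show x = σ x from h1).symm

open Classical in
/-- The contribution of the ordered pair `(a, b)`. -/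
noncomputable def TT (σ : Equiv.Perm α) (P : Setoid α) (a b : α) : ℚ :=
  (if b ∈ cls P a \ cls (ZZ σ) a then GG (ZZ (σ * Equiv.swap a b)) P else 0) +
  (if b ∈ (cls (ZZ σ) a).erase a then
    ∑ P' ∈ univ.filter (fun P' => Merges P' P a b ∧ ZZ (σ * Equiv.swap a b) ≤ P'),
      GG (ZZ (σ * Equiv.swap a b)) P' else 0)

theorem TT_sum (σ : Equiv.Perm α) (P : Setoid α) (a : α) :
    ∑ b ∈ univ.erase a, TT σ P a b = joinT σ P a + cutT σ P a := by
  unfold TT joinT cutT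
  rw [Finset.sum_add_distrib, Finset.sum_ite_mem, Finset.sum_ite_mem]
  congr 1
  · refine Finset.sum_congr ?_ fun _ _ => rfl
    rw [Finset.inter_eq_right]
    intro b hb
    rw [mem_erase]
    refine ⟨?_, mem_univ _⟩
    rintro rfl
    exact (mem_sdiff.mp hb).2 (self_mem_cls _ _)
  · refine Finset.sum_congr ?_ fun _ _ => rfl
    rw [Finset.inter_eq_right]
    exact Finset.erase_subset_erase _ (subset_univ _)

open Classical in
theorem NN_pair {r : ℕ} (ih : ∀ (σ : Equiv.Perm α) (P : Setoid α), ZZ σ ≤ P →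
      r + 2 * #(blocks P) = Fintype.card α + #(blocks (ZZ σ)) →
      NN r σ P = (r.factorial : ℚ) * GG (ZZ σ) P)
    {σ : Equiv.Perm α} {P : Setoid α} (hle : ZZ σ ≤ P)
    (hr : r + 1 + 2 * #(blocks P) = Fintype.card α + #(blocks (ZZ σ))) {a b : α} (hab : a ≠ b) :
    ∑ P' : Setoid α, (if P' ⊔ ZZ (Equiv.swap a b) = P then NN r (σ * Equiv.swap a b) P' else 0) =
      (r.factorial : ℚ) * TT σ P a b := by
  rw [ZZ_swap]
  by_cases hz : ZZ σ a b
  · have hc := cut_card hz hab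
    have hPab : P a b := hle hz
    have e1 : b ∉ cls P a \ cls (ZZ σ) a := fun h => (mem_sdiff.mp h).2 (mem_cls.mpr hz)
    have e2 : b ∈ (cls (ZZ σ) a).erase a := mem_erase.mpr ⟨Ne.symm hab, mem_cls.mpr hz⟩
    rw [TT, if_neg e1, if_pos e2, zero_add, Finset.mul_sum, Finset.sum_filter]
    refine Finset.sum_congr rfl fun P' _ => ?_
    by_cases hP' : P' ⊔ link a b = P
    · rw [if_pos hP']
      by_cases hs : P' a b
      · have hPP : P' = P := by
          rwa [sup_eq_left.mpr ((link_le_iff _ a b).mpr hs)] at hP'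
        rw [if_neg (fun h => h.1.sep hs)]
        by_contra hne
        have := NN_bound hne
        rw [hPP] at this
        omega
      · have hm : Merges P' P a b := ⟨hP'.symm, hs⟩
        have h5 := hm.card_blocks
        by_cases hl : ZZ (σ * Equiv.swap a b) ≤ P'
        · rw [if_pos ⟨hm, hl⟩]
          exact ih _ _ hl (by omega)
        · rw [if_neg (fun h => hl h.2)]
          by_contra hne
          exact hl (NN_le hne)
    · rw [if_neg hP', if_neg (fun h => hP' h.1.eq.symm)]
  · have hc := join_card hz
    have e2 : b ∉ (cls (ZZ σ) a).erase a := fun h => hz (mem_cls.mp (mem_erase.mp h).2)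
    by_cases hPab : P a b
    · have e1 : b ∈ cls P a \ cls (ZZ σ) a :=
        mem_sdiff.mpr ⟨mem_cls.mpr hPab, fun h => hz (mem_cls.mp h)⟩
      rw [TT, if_pos e1, if_neg e2, add_zero, Finset.sum_eq_single P]
      · rw [if_pos (sup_eq_left.mpr ((link_le_iff _ a b).mpr hPab))]
        refine ih _ _ ?_ (by omega)
        exact (ZZ_mul_swap_le σ a b).trans (sup_le hle ((link_le_iff _ _ _).mpr hPab))
      · intro P' _ hne
        split_ifs with h
        · by_contra hN
          have h4 := NN_le hN ((ZZ_swap_rel hab).mpr hz)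
          rw [sup_eq_left.mpr ((link_le_iff _ a b).mpr h4)] at h
          exact hne h
        · rfl
      · intro h; exact absurd (mem_univ P) h
    · have e1 : b ∉ cls P a \ cls (ZZ σ) a := fun h => hPab (mem_cls.mp (mem_sdiff.mp h).1)
      rw [TT, if_neg e1, if_neg e2, add_zero, mul_zero]
      refine Finset.sum_eq_zero fun P' _ => if_neg ?_
      rintro rfl
      exact hPab ((link_le_iff _ a b).mp le_sup_right)

theorem NN_eq (r : ℕ) (σ : Equiv.Perm α) (P : Setoid α) (hle : ZZ σ ≤ P)
    (hr : r + 2 * #(blocks P) = Fintype.card α + #(blocks (ZZ σ))) :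
    NN r σ P = (r.factorial : ℚ) * GG (ZZ σ) P := by
  induction r generalizing σ P with
  | zero =>
    have h1 := card_blocks_anti hle
    have h2 := card_blocks_le (ZZ σ)
    have h3 : P = ⊥ := eq_bot_of_card (by omega)
    have h4 : ZZ σ = ⊥ := eq_bot_of_card (by omega)
    rw [NN, h4, h3, GG_bot_bot, if_pos ⟨ZZ_eq_bot h4, rfl⟩]
    simp
  | succ r ih =>
    have h1 : 2 * NN (r + 1) σ P = ∑ a, (r.factorial : ℚ) * (joinT σ P a + cutT σ P a) := by
      rw [NN, sum_swaps]
      refine Finset.sum_congr rfl fun a _ => ?_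
      rw [← TT_sum, Finset.mul_sum]
      refine Finset.sum_congr rfl fun b hb => ?_
      exact NN_pair ih hle hr (Ne.symm (mem_erase.mp hb).1)
    rw [← Finset.mul_sum, state_identity hle] at h1
    have h2 : (r:ℚ) + 1 + 2 * #(blocks P) = Fintype.card α + #(blocks (ZZ σ)) := by
      exact_mod_cast hr
    rw [← h2] at h1
    rw [Nat.factorial_succ]
    push_cast
    linear_combination h1 / 2

theorem iSup_last {r : ℕ} {β : Type*} [CompleteLattice β] (f : Fin (r+1) → β) :
    ⨆ i, f i = (⨆ i : Fin r, f i.castSucc) ⊔ f (Fin.last r) := by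
  apply le_antisymm
  · refine iSup_le fun i => ?_
    refine Fin.lastCases ?_ (fun j => ?_) i
    · exact le_sup_right
    · exact le_sup_of_le_left (le_iSup (fun j : Fin r => f j.castSucc) j)
  · exact sup_le (iSup_le fun j => le_iSup f _) (le_iSup f _)

/-- The condition being counted. -/
def Good (r : ℕ) (σ : Equiv.Perm α) (P : Setoid α) (τ : Fin r → Equiv.Perm α) : Prop :=
  (∀ i, (τ i).IsSwap) ∧ (List.ofFn τ).prod = σ ∧ ⨆ i, ZZ (τ i) = P

theorem Good_snoc (r : ℕ) (σ : Equiv.Perm α) (P : Setoid α) (f : Fin r → Equiv.Perm α)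
    (x : Equiv.Perm α) :
    Good (r+1) σ P (Fin.snoc f x : Fin (r+1) → Equiv.Perm α) ↔
      x.IsSwap ∧ ((⨆ i, ZZ (f i)) ⊔ ZZ x = P) ∧ Good r (σ * x) (⨆ i, ZZ (f i)) f := by
  unfold Good
  rw [Fin.forall_fin_succ', iSup_last, List.ofFn_succ']
  simp only [Fin.snoc_castSucc, Fin.snoc_last, List.concat_eq_append, List.prod_append,
    List.prod_singleton, and_true]
  have : x.IsSwap → ((List.ofFn f).prod * x = σ ↔ (List.ofFn f).prod = σ * x) := by
    rintro ⟨a, b, hab, rfl⟩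
    constructor
    · rintro rfl; rw [mul_assoc, Equiv.swap_mul_self, mul_one]
    · intro h; rw [h, mul_assoc, Equiv.swap_mul_self, mul_one]
  tauto

open Classical in
theorem count_eq (r : ℕ) (σ : Equiv.Perm α) (P : Setoid α) :
    (∑ τ : Fin r → Equiv.Perm α, if Good r σ P τ then (1:ℚ) else 0) = NN r σ P := by
  induction r generalizing σ P with
  | zero =>
    rw [Fintype.sum_eq_single (fun i => 1) (fun τ h => absurd (Subsingleton.elim _ _) h), NN]
    congr 1
    unfold Good
    rw [iSup_of_empty]
    simp [eq_comm]
  | succ r ih =>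
    rw [← (Fin.snocEquiv (fun _ : Fin (r+1) => Equiv.Perm α)).sum_comp, Fintype.sum_prod_type, NN]
    refine Finset.sum_congr rfl fun x _ => ?_
    simp only [← ih]
    have h1 : ∀ f : Fin r → Equiv.Perm α,
        (if Good (r+1) σ P ((Fin.snocEquiv (fun _ : Fin (r+1) => Equiv.Perm α)) (x, f))
          then (1:ℚ) else 0) = if x.IsSwap then ∑ P' : Setoid α, (if P' ⊔ ZZ x = P then
            (if Good r (σ * x) P' f then 1 else 0) else 0) else 0 := by
      intro f
      have h2 : Good (r+1) σ P ((Fin.snocEquiv (fun _ : Fin (r+1) => Equiv.Perm α)) (x, f)) ↔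
        x.IsSwap ∧ ((⨆ i, ZZ (f i)) ⊔ ZZ x = P) ∧ Good r (σ * x) (⨆ i, ZZ (f i)) f :=
        Good_snoc r σ P f x
      rw [Finset.sum_eq_single (⨆ i, ZZ (f i))]
      · by_cases c1 : x.IsSwap <;> by_cases c2 : (⨆ i, ZZ (f i)) ⊔ ZZ x = P <;>
          by_cases c3 : Good r (σ * x) (⨆ i, ZZ (f i)) f <;> simp [h2, c1, c2, c3]
      · intro P' _ hne
        rw [if_neg (c := Good r (σ * x) P' f) (fun h => hne h.2.2.symm), ite_self]
      · intro h; exact absurd (mem_univ _) h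
    rw [Finset.sum_congr rfl fun f _ => h1 f]
    by_cases c1 : x.IsSwap
    · simp only [if_pos c1]
      rw [Finset.sum_comm]
      refine Finset.sum_congr rfl fun P' _ => ?_
      by_cases c2 : P' ⊔ ZZ x = P
      · simp only [if_pos c2]
      · simp only [if_neg c2, Finset.sum_const_zero]
    · simp only [if_neg c1, Finset.sum_const_zero]

theorem trans_iff {r : ℕ} (τ : Fin r → Equiv.Perm α) :
    (∀ x y : α, ∃ σ ∈ Subgroup.closure (Set.range τ), σ x = y) ↔ ⨆ i, ZZ (τ i) = ⊤ := by
  constructor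
  · intro h
    rw [eq_top_iff]
    intro x y hxy
    clear hxy
    obtain ⟨σ, hσ, rfl⟩ := h x y
    have : ∀ z, (⨆ i, ZZ (τ i)) z (σ z) := by
      induction hσ using Subgroup.closure_induction with
      | mem s hs =>
        obtain ⟨i, rfl⟩ := hs
        intro z
        exact (le_iSup (fun i => ZZ (τ i)) i) (ZZ_apply (τ i) z)
      | one => intro z; exact Setoid.refl' _ _
      | mul s t _ _ h1 h2 => intro z; exact Setoid.trans' _ (h2 z) (h1 _)
      | inv s _ h1 =>
        intro z
        have := h1 (s⁻¹ z)
        rw [← Equiv.Perm.mul_apply, mul_inv_cancel, Equiv.Perm.one_apply] at this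
        exact Setoid.symm' _ this
    exact this x
  · intro h
    let R : Setoid α :=
      { r := fun x y => ∃ σ ∈ Subgroup.closure (Set.range τ), σ x = y
        iseqv := ⟨fun x => ⟨1, one_mem _, rfl⟩,
          fun {x y} ⟨σ, hσ, h⟩ => ⟨σ⁻¹, inv_mem hσ, by rw [← h]; simp⟩,
          fun {x y z} ⟨σ, hσ, h⟩ ⟨σ', hσ', h'⟩ => ⟨σ' * σ, mul_mem hσ' hσ, by
            rw [Equiv.Perm.mul_apply, h, h']⟩⟩ }
    have hR : ⨆ i, ZZ (τ i) ≤ R := by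
      refine iSup_le fun i => ZZ_le fun x => ?_
      exact ⟨τ i, Subgroup.subset_closure ⟨i, rfl⟩, rfl⟩
    rw [h] at hR
    intro x y
    exact hR (show (⊤ : Setoid α) x y from trivial)

theorem main_count [Nonempty α] :
    (Nat.card {τ : Fin (2 * Fintype.card α - 2) → Equiv.Perm α //
      (∀ i, (τ i).IsSwap) ∧ (List.ofFn τ).prod = 1 ∧
      ∀ x y : α, ∃ σ ∈ Subgroup.closure (Set.range τ), σ x = y} : ℚ) =
    ((2 * Fintype.card α - 2).factorial : ℚ) *
      (Fintype.card α : ℚ) ^ ((Fintype.card α : ℤ) - 3) := by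
  classical
  have hpos : 0 < Fintype.card α := Fintype.card_pos
  have h := NN_eq (2 * Fintype.card α - 2) (1 : Equiv.Perm α) ⊤ le_top (by
    rw [blocks_top, ZZ_one, blocks_bot_card, card_singleton]; omega)
  rw [ZZ_one, GG_bot_top, ← count_eq] at h
  rw [← h, Finset.sum_boole]
  congr 1
  refine Nat.subtype_card _ fun τ => ?_
  rw [trans_iff]
  refine Finset.mem_filter.trans ⟨fun h => h.2, fun h => ⟨mem_univ _, h⟩⟩

end
end Hurw

/-- For every `d ≥ 1`, the genus `0` Hurwitz number satisfies
`H_{0,d} = (2d - 2)! ⬝ d^(d-3) / d!` in `ℚ`; equivalently, the count of tuples of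
transpositions times `d³` equals `(2d - 2)! ⬝ d^d`. -/
theorem genus_zero_hurwitz_formula (d : ℕ) (hd : 1 ≤ d) :
    hurwitzNumber 0 d =
      ((2 * d - 2).factorial : ℚ) * (d : ℚ) ^ d / ((d : ℚ) ^ 3 * (Nat.factorial d : ℚ)) ∧
    hurwitzTupleCount d (2 * d - 2) * d ^ 3 = (2 * d - 2).factorial * d ^ d := by
  have key : (hurwitzTupleCount d (2 * d - 2) : ℚ) =
      ((2 * d - 2).factorial : ℚ) * (d : ℚ) ^ ((d : ℤ) - 3) := by
    have : Nonempty (Fin d) := ⟨⟨0, hd⟩⟩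
    have h := Hurw.main_count (α := Fin d)
    rw [Fintype.card_fin] at h
    exact h
  have hd0 : (d : ℚ) ≠ 0 := by
    have : d ≠ 0 := by omega
    exact_mod_cast this
  have hz : (d : ℚ) ^ ((d : ℤ) - 3) = (d : ℚ) ^ d / (d : ℚ) ^ 3 := by
    rw [zpow_sub₀ hd0, zpow_natCast]
    norm_cast
  rw [hz] at key
  constructor
  · unfold hurwitzNumber
    rw [show 2 * 0 + 2 * d - 2 = 2 * d - 2 by omega, key]
    have hf : (Nat.factorial d : ℚ) ≠ 0 := by exact_mod_cast Nat.factorial_ne_zero d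
    field_simp
  · have h2 : (hurwitzTupleCount d (2 * d - 2) : ℚ) * (d : ℚ) ^ 3 =
        ((2 * d - 2).factorial : ℚ) * (d : ℚ) ^ d := by
      rw [key]
      field_simp
    exact_mod_cast h2
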